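/- Let (S,T) be a Cuntz-type representation of F_θ^+ on H (m ≥ 2 or n ≥ 2). If for some k,l > 0 the row-isometry [S_uT_v : |u|=k, |v|=l] is of dilation type, then its structure projection dominates all the others: P_{k,l} ≥ P_{p,q} for all p,q > 0, i.e. P_{p,q}H ⊆ P_{k,l}H. -/

import Mathlib

noncomputable section

open scoped InnerProductSpace ComplexInnerProductSpace Classical

section GeneralDefs

variable {E : Type*} [NormedAddCommGroup E] [InnerProductSpace ℂ E]

/-- The operator associated to a word: `wordOp V [a₁, …, a_r] = V a₁ * ⋯ * V a_r`. -/
def wordOp {ι : Type*} (V : ι → E →L[ℂ] E) (w : List ι) : E →L[ℂ] E :=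
  (w.map V).prod

/-- The operator associated to a word of fixed length `k` given as a function `Fin k → ι`. -/
def fnWordOp {ι : Type*} {k : ℕ} (V : ι → E →L[ℂ] E) (u : Fin k → ι) : E →L[ℂ] E :=
  wordOp V (List.ofFn u)

/-- The closure of a set of operators in the weak operator topology, described via
basic WOT-neighbourhoods (finitely many vector functionals). -/
def wotClosure (S : Set (E →L[ℂ] E)) : Set (E →L[ℂ] E) :=
  {A | ∀ ε > (0 : ℝ), ∀ F : Finset (E × E), ∃ B ∈ S, ∀ p ∈ F, ‖⟪p.1, (A - B) p.2⟫‖ < ε}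

/-- The unital WOT-closed algebra generated by a set of operators. -/
def genWotAlg (G : Set (E →L[ℂ] E)) : Set (E →L[ℂ] E) :=
  wotClosure ((Algebra.adjoin ℂ G : Subalgebra ℂ (E →L[ℂ] E)) : Set (E →L[ℂ] E))

/-- A wandering vector for a row-isometry `V = [V_a : a ∈ ι]`: a unit vector whose orbit
under all words in the `V_a` is an orthonormal family. -/
def IsWandering {ι : Type*} (V : ι → E →L[ℂ] E) (ζ : E) : Prop :=
  ‖ζ‖ = 1 ∧ ∀ w w' : List ι,
    ⟪wordOp V w ζ, wordOp V w' ζ⟫ = if w = w' then 1 else 0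

/-- Restriction of an operator to an invariant subspace (junk value `0` if not invariant). -/
def restrictCLM (A : E →L[ℂ] E) (M : Submodule ℂ E) : M →L[ℂ] M :=
  if h : ∀ x ∈ M, A x ∈ M then
    { toFun := fun x => ⟨A x, h x x.2⟩
      map_add' := by intro x y; ext; simp
      map_smul' := by intro c x; ext; simp
      cont := Continuous.subtype_mk (A.continuous.comp continuous_subtype_val) _ }
  else 0

/-- The unital WOT-closed algebra on `M` generated by the restrictions of the `V a` to `M`. -/
def rowAlgOn {ι : Type*} (V : ι → E →L[ℂ] E) (M : Submodule ℂ E) : Set (M →L[ℂ] M) :=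
  genWotAlg (Set.range fun a => restrictCLM (V a) M)

/-- The unital WOT-closed algebra on `M` generated by the restrictions of the `V a`
is self-adjoint. -/
def restrictedAlgSelfAdjoint {ι : Type*} (V : ι → E →L[ℂ] E) (M : Submodule ℂ E) : Prop :=
  ∀ A ∈ rowAlgOn V M, ∃ B ∈ rowAlgOn V M,
    ∀ x y : M, ⟪((A x : M) : E), (y : E)⟫ = ⟪(x : E), ((B y : M) : E)⟫

variable [CompleteSpace E]

/-- A row-isometry is of dilation type if it is defect free and has no nonzero reducing
subspace on which it is either absolutely continuous (spanned by wandering vectors) or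
singular (generating a self-adjoint WOT-closed algebra). -/
def IsDilationType {ι : Type*} [Fintype ι] (V : ι → E →L[ℂ] E) : Prop :=
  (∑ a, V a * star (V a)) = 1 ∧
    ¬ ∃ M : Submodule ℂ E, M ≠ ⊥ ∧ IsClosed (M : Set E) ∧
      (∀ a, ∀ x ∈ M, V a x ∈ M) ∧ (∀ a, ∀ x ∈ M, star (V a) x ∈ M) ∧
      ((M = (Submodule.span ℂ {ζ : E | ζ ∈ M ∧ IsWandering V ζ}).topologicalClosure) ∨
        restrictedAlgSelfAdjoint V M)

end GeneralDefs

/-- An isometric representation of the single-vertex 2-graph `F_θ⁺` on a Hilbert space `H`. -/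
structure TwoGraphRep (m n : ℕ) (θ : Equiv.Perm (Fin m × Fin n)) (H : Type*)
    [NormedAddCommGroup H] [InnerProductSpace ℂ H] [CompleteSpace H] where
  S : Fin m → H →L[ℂ] H
  T : Fin n → H →L[ℂ] H
  isometS : ∀ i i', star (S i) * S i' = if i = i' then 1 else 0
  isometT : ∀ j j', star (T j) * T j' = if j = j' then 1 else 0
  comm : ∀ i j, S i * T j = T (θ (i, j)).2 * S (θ (i, j)).1

namespace TwoGraphRep

variable {m n : ℕ} {θ : Equiv.Perm (Fin m × Fin n)} {H : Type*}
  [NormedAddCommGroup H] [InnerProductSpace ℂ H] [CompleteSpace H]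

/-- A representation is of Cuntz type if both row-isometries are defect free. -/
def CuntzType (ρ : TwoGraphRep m n θ H) : Prop :=
  (∑ i, ρ.S i * star (ρ.S i)) = 1 ∧ (∑ j, ρ.T j * star (ρ.T j)) = 1

/-- The nonself-adjoint 2-graph algebra `𝔖`: the unital WOT-closed algebra generated by
the `S_i` and `T_j`. -/
def alg (ρ : TwoGraphRep m n θ H) : Set (H →L[ℂ] H) :=
  genWotAlg (Set.range ρ.S ∪ Set.range ρ.T)

/-- The von Neumann algebra generated by the `S_i` and `T_j`: the WOT-closure of the
unital *-algebra they generate. -/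
def vnAlg (ρ : TwoGraphRep m n θ H) : Set (H →L[ℂ] H) :=
  genWotAlg ((Set.range ρ.S ∪ Set.range ρ.T) ∪ star '' (Set.range ρ.S ∪ Set.range ρ.T))

/-- Wandering vector for the row-isometry `[S_u T_v : |u| = k, |v| = l]`. -/
def IsWanderingKL (ρ : TwoGraphRep m n θ H) (k l : ℕ) (ζ : H) : Prop :=
  ‖ζ‖ = 1 ∧ ∀ (p p' : ℕ) (u u' : List (Fin m)) (v v' : List (Fin n)),
    u.length = p * k → v.length = p * l → u'.length = p' * k → v'.length = p' * l →
    ⟪(wordOp ρ.S u * wordOp ρ.T v) ζ, (wordOp ρ.S u' * wordOp ρ.T v') ζ⟫ =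
      if u = u' ∧ v = v' then 1 else 0

/-- The range of the structure projection `P_{k,l}`: the orthogonal complement of the
closed linear span of the wandering vectors of `[S_u T_v : |u| = k, |v| = l]`. -/
def structSpaceKL (ρ : TwoGraphRep m n θ H) (k l : ℕ) : Submodule ℂ H :=
  ((Submodule.span ℂ {ζ : H | ρ.IsWanderingKL k l ζ}).topologicalClosure)ᗮ

/-- The range of the first structure projection `P = ⋀_{k,l>0} P_{k,l}`. -/
def firstStructSpace (ρ : TwoGraphRep m n θ H) : Submodule ℂ H :=
  ⨅ (k : ℕ) (l : ℕ) (_ : 0 < k) (_ : 0 < l), ρ.structSpaceKL k l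

/-- The row-isometry `[S_u T_v : |u| = k, |v| = l]`. -/
def rowKL (ρ : TwoGraphRep m n θ H) (k l : ℕ) :
    ((Fin k → Fin m) × (Fin l → Fin n)) → H →L[ℂ] H :=
  fun p => fnWordOp ρ.S p.1 * fnWordOp ρ.T p.2

/-- A wandering vector for the representation `(S,T)`. -/
def IsWanderingRep (ρ : TwoGraphRep m n θ H) (ζ : H) : Prop :=
  ‖ζ‖ = 1 ∧ ∀ (u u' : List (Fin m)) (v v' : List (Fin n)),
    ⟪(wordOp ρ.S u * wordOp ρ.T v) ζ, (wordOp ρ.S u' * wordOp ρ.T v') ζ⟫ =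
      if u = u' ∧ v = v' then 1 else 0

/-- The representation is irreducible: the only closed subspaces invariant under all
`S_i, T_j, S_i*, T_j*` are `⊥` and `⊤`. -/
def Irreducible (ρ : TwoGraphRep m n θ H) : Prop :=
  ∀ M : Submodule ℂ H, IsClosed (M : Set H) →
    (∀ i, ∀ x ∈ M, ρ.S i x ∈ M) → (∀ i, ∀ x ∈ M, star (ρ.S i) x ∈ M) →
    (∀ j, ∀ x ∈ M, ρ.T j x ∈ M) → (∀ j, ∀ x ∈ M, star (ρ.T j) x ∈ M) →
    M = ⊥ ∨ M = ⊤

/-- The representation is atomic with standard basis `ξ`: every generator maps each basis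
vector to a unimodular multiple of a basis vector. -/
def AtomicBasis {Λ : Type*} (ρ : TwoGraphRep m n θ H) (ξ : HilbertBasis Λ ℂ H) : Prop :=
  (∀ i t, ∃ (c : ℂ) (t' : Λ), ‖c‖ = 1 ∧ ρ.S i (ξ t) = c • ξ t') ∧
  (∀ j t, ∃ (c : ℂ) (t' : Λ), ‖c‖ = 1 ∧ ρ.T j (ξ t) = c • ξ t')

/-- `x` has a blue ring: `S_u x ∈ 𝕋x` for some nonempty word `u`. -/
def HasBlueRing (ρ : TwoGraphRep m n θ H) (x : H) : Prop :=
  ∃ u : List (Fin m), u ≠ [] ∧ ∃ c : ℂ, ‖c‖ = 1 ∧ wordOp ρ.S u x = c • x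

/-- `x` has a red ring: `T_v x ∈ 𝕋x` for some nonempty word `v`. -/
def HasRedRing (ρ : TwoGraphRep m n θ H) (x : H) : Prop :=
  ∃ v : List (Fin n), v ≠ [] ∧ ∃ c : ℂ, ‖c‖ = 1 ∧ wordOp ρ.T v x = c • x

/-- `x` has a mixed ring: `T_v S_u x ∈ 𝕋x` for some nonempty words `u`, `v`. -/
def HasMixedRing (ρ : TwoGraphRep m n θ H) (x : H) : Prop :=
  ∃ (u : List (Fin m)) (v : List (Fin n)), u ≠ [] ∧ v ≠ [] ∧
    ∃ c : ℂ, ‖c‖ = 1 ∧ wordOp ρ.T v (wordOp ρ.S u x) = c • x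

end TwoGraphRep

/-!
The wandering vectors of `[S_u T_v : |u| = k, |v| = l]` are mapped to wandering vectors by all the
operators `S_u T_v`, of any degree, so their closed span `W` is invariant under the whole
representation. Wold decomposition of the row-isometry of degree `(p, q)` on `W` splits `W` into the
closed span of the wandering vectors for `(p, q)` lying in `W`, and the vectors all of whose
backward shifts remain in `W`. Because the representation is of Cuntz type, the backward shifts of
degree `(p, q)` control those of degree `(k, l)`, hence this second part is contained in the largest
subspace `M ⊆ W` reducing the row-isometry `V` of degree `(k, l)`. It remains to show `M = 0`.

The projection onto `M` commutes with `V`, so the absolutely continuous vectors (those `x` for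
which `e_w ↦ V_w x` extends to a bounded operator `X` on Fock space) are dense in `M`. If `M ≠ 0`,
a pair of vectors `x ∈ M` and `y` is corrected step by step, with `x` absolutely continuous at each
step, so that `X* y` converges to the vacuum vector. In the limit `⟪x, y⟫ = 1` and `⟪V_w x, y⟫ = 0`
for all `w ≠ ∅`, so `x` is not in the closed span of the `V_w x` with `w ≠ ∅`, and its component
orthogonal to that span is a multiple of a wandering vector `ζ ∈ M`. Perturbing `ζ` by small
multiples of absolutely continuous vectors then shows that `M` is spanned by wandering vectors,
which dilation type excludes.
-/

section WordOperators

variable {E : Type*} [NormedAddCommGroup E] [InnerProductSpace ℂ E]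
  {ι : Type*} (V : ι → E →L[ℂ] E)

@[simp]
theorem wordOp_nil : wordOp V [] = 1 := rfl

theorem wordOp_cons (a : ι) (w : List ι) : wordOp V (a :: w) = V a * wordOp V w := by
  simp [wordOp]

theorem wordOp_cons_apply (a : ι) (w : List ι) (x : E) :
    wordOp V (a :: w) x = V a (wordOp V w x) := by
  simp [wordOp_cons]

theorem wordOp_append (w w' : List ι) : wordOp V (w ++ w') = wordOp V w * wordOp V w' := by
  simp [wordOp]

theorem wordOp_append_apply (w w' : List ι) (x : E) :
    wordOp V (w ++ w') x = wordOp V w (wordOp V w' x) := by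
  simp [wordOp_append]

variable {V}

theorem wordOp_mem {M : Submodule ℂ E} (hM : ∀ a, ∀ x ∈ M, V a x ∈ M) (w : List ι) {x : E}
    (hx : x ∈ M) : wordOp V w x ∈ M := by
  induction w with
  | nil => simpa using hx
  | cons a w ih => rw [wordOp_cons_apply]; exact hM a _ ih

end WordOperators

section WanderingSpan

variable {E : Type*} [NormedAddCommGroup E] [InnerProductSpace ℂ E] {ι : Type*}
  {V : ι → E →L[ℂ] E} {M N : Submodule ℂ E}

/-- The closed linear span of the wandering vectors of `V` lying in `M`. -/
def wanderingSpan (V : ι → E →L[ℂ] E) (M : Submodule ℂ E) : Submodule ℂ E :=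
  (Submodule.span ℂ {ζ : E | ζ ∈ M ∧ IsWandering V ζ}).topologicalClosure

theorem isClosed_wanderingSpan (V : ι → E →L[ℂ] E) (M : Submodule ℂ E) :
    IsClosed (wanderingSpan V M : Set E) :=
  Submodule.isClosed_topologicalClosure _

theorem IsWandering.mem_wanderingSpan {ζ : E} (hζ : IsWandering V ζ) (hM : ζ ∈ M) :
    ζ ∈ wanderingSpan V M :=
  Submodule.le_topologicalClosure _ (Submodule.subset_span ⟨hM, hζ⟩)

theorem wanderingSpan_le (hN : IsClosed (N : Set E))
    (h : ∀ ζ ∈ M, IsWandering V ζ → ζ ∈ N) : wanderingSpan V M ≤ N :=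
  Submodule.topologicalClosure_minimal _ (Submodule.span_le.2 fun ζ hζ => h ζ hζ.1 hζ.2) hN

theorem wanderingSpan_mono (h : M ≤ N) : wanderingSpan V M ≤ wanderingSpan V N :=
  wanderingSpan_le (isClosed_wanderingSpan V N) fun _ hM hζ => hζ.mem_wanderingSpan (h hM)

end WanderingSpan

section RowIsometry

variable {H : Type*} [NormedAddCommGroup H] [InnerProductSpace ℂ H] [CompleteSpace H]

theorem inner_star_apply (A : H →L[ℂ] H) (x y : H) : ⟪x, star A y⟫ = ⟪A x, y⟫ := by
  rw [ContinuousLinearMap.star_eq_adjoint, ContinuousLinearMap.adjoint_inner_right]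

variable {ι : Type*} {V : ι → H →L[ℂ] H}

theorem star_wordOp_mem {M : Submodule ℂ H} (hMs : ∀ a, ∀ x ∈ M, star (V a) x ∈ M)
    (w : List ι) {x : H} (hx : x ∈ M) : star (wordOp V w) x ∈ M := by
  induction w generalizing x with
  | nil => simpa using hx
  | cons a w ih => rw [wordOp_cons, star_mul]; exact ih (hMs a x hx)

/-- A tuple of isometries with pairwise orthogonal ranges. -/
def IsRowIsometry (V : ι → H →L[ℂ] H) : Prop :=
  ∀ a b, star (V a) * V b = if a = b then 1 else 0

namespace IsRowIsometry

theorem star_apply_apply (hV : IsRowIsometry V) (a b : ι) (x : H) :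
    star (V a) (V b x) = if a = b then x else 0 := by
  have := congrArg (fun A : H →L[ℂ] H => A x) (hV a b)
  split_ifs with hab <;> simpa [hab] using this

theorem inner_apply_apply (hV : IsRowIsometry V) (a b : ι) (x y : H) :
    ⟪V a x, V b y⟫ = if a = b then ⟪x, y⟫ else 0 := by
  rw [← inner_star_apply, hV.star_apply_apply]
  split_ifs <;> simp

theorem of_inner (h : ∀ a b x y, ⟪V a x, V b y⟫ = if a = b then ⟪x, y⟫ else 0) :
    IsRowIsometry V := by
  refine fun a b => ContinuousLinearMap.ext fun y => ext_inner_left ℂ fun x => ?_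
  rw [mul_apply_eq_comp, inner_star_apply, h]
  split_ifs <;> simp

theorem norm_apply (hV : IsRowIsometry V) (a : ι) (x : H) : ‖V a x‖ = ‖x‖ := by
  rw [@norm_eq_sqrt_re_inner ℂ, @norm_eq_sqrt_re_inner ℂ _ _ _ _ x, hV.inner_apply_apply,
    if_pos rfl]

theorem norm_wordOp (hV : IsRowIsometry V) (w : List ι) (x : H) : ‖wordOp V w x‖ = ‖x‖ := by
  induction w with
  | nil => simp
  | cons a w ih => rw [wordOp_cons_apply, hV.norm_apply, ih]

theorem inner_wordOp_of_length_eq (hV : IsRowIsometry V) {w w' : List ι}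
    (h : w.length = w'.length) (x y : H) :
    ⟪wordOp V w x, wordOp V w' y⟫ = if w = w' then ⟪x, y⟫ else 0 := by
  induction w generalizing w' with
  | nil => simp [List.length_eq_zero_iff.1 h.symm]
  | cons a w ih =>
    obtain ⟨b, w', rfl⟩ := List.exists_cons_of_length_eq_add_one h.symm
    rw [wordOp_cons_apply, wordOp_cons_apply, hV.inner_apply_apply, ih (by simpa using h)]
    simp [ite_and]

protected theorem fnWordOp (hV : IsRowIsometry V) (r : ℕ) :
    IsRowIsometry fun u : Fin r → ι => fnWordOp V u :=
  of_inner fun u u' x y => by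
    rw [fnWordOp, fnWordOp, hV.inner_wordOp_of_length_eq (by simp)]
    simp

theorem isWandering_iff (hV : IsRowIsometry V) {ζ : H} :
    IsWandering V ζ ↔ ‖ζ‖ = 1 ∧ ∀ w ≠ [], ⟪wordOp V w ζ, ζ⟫ = 0 := by
  refine and_congr_right fun hζ => ⟨fun h w hw => by simpa [hw] using h w [], fun h w => ?_⟩
  induction w with
  | nil =>
    intro w'
    rcases eq_or_ne w' [] with rfl | hw'
    · simp [hζ]
    · rw [if_neg hw'.symm, ← inner_conj_symm, wordOp_nil, one_apply_eq_self, h w' hw', map_zero]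
  | cons a w ih =>
    rintro (_ | ⟨b, w'⟩)
    · simpa using h (a :: w) (by simp)
    · rw [wordOp_cons_apply, wordOp_cons_apply, hV.inner_apply_apply, ih]
      simp [ite_and]

theorem isWandering_wordOp (hV : IsRowIsometry V) {ζ : H} (hζ : IsWandering V ζ) (u : List ι) :
    IsWandering V (wordOp V u ζ) := by
  refine ⟨by rw [hV.norm_wordOp, hζ.1], fun w w' => ?_⟩
  rw [← wordOp_append_apply, ← wordOp_append_apply, hζ.2]
  simp

theorem isWandering_smul (hV : IsRowIsometry V) {ξ : H} (h0 : ξ ≠ 0)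
    (h : ∀ w ≠ [], ⟪wordOp V w ξ, ξ⟫ = 0) : IsWandering V ((‖ξ‖⁻¹ : ℂ) • ξ) := by
  refine hV.isWandering_iff.2 ⟨?_, fun w hw => ?_⟩
  · rw [norm_smul]; simp [h0]
  · rw [map_smul, inner_smul_left, inner_smul_right, h w hw]; simp

theorem apply_mem_wanderingSpan (hV : IsRowIsometry V) {M : Submodule ℂ H}
    (hM : ∀ a, ∀ x ∈ M, V a x ∈ M) (a : ι) {x : H} (hx : x ∈ wanderingSpan V M) :
    V a x ∈ wanderingSpan V M := by
  suffices wanderingSpan V M ≤ (wanderingSpan V M).comap (V a).toLinearMap from this hx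
  refine wanderingSpan_le ((isClosed_wanderingSpan V M).preimage (V a).continuous) ?_
  intro ζ hζM hζ
  have hVζ : IsWandering V (V a ζ) := by simpa [wordOp] using hV.isWandering_wordOp hζ [a]
  exact hVζ.mem_wanderingSpan (hM a ζ hζM)

end IsRowIsometry

end RowIsometry

section Wold

variable {H : Type*} [NormedAddCommGroup H] [InnerProductSpace ℂ H] [CompleteSpace H]
  {ι : Type*} {V : ι → H →L[ℂ] H} {K : Submodule ℂ H}

/-- `M` is a closed subspace reducing every `V a`. -/
structure IsReducing (V : ι → H →L[ℂ] H) (M : Submodule ℂ H) : Prop where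
  isClosed : IsClosed (M : Set H)
  apply_mem : ∀ a, ∀ x ∈ M, V a x ∈ M
  star_apply_mem : ∀ a, ∀ x ∈ M, star (V a) x ∈ M

/-- The vectors all of whose backward shifts `V_w* x` lie in `K`. For an invariant subspace `K`
this is the Cuntz part of the Wold decomposition of the restriction of `V` to `K`. -/
def backwardCore (V : ι → H →L[ℂ] H) (K : Submodule ℂ H) : Submodule ℂ H :=
  ⨅ w : List ι, K.comap (star (wordOp V w)).toLinearMap

theorem mem_backwardCore {x : H} : x ∈ backwardCore V K ↔ ∀ w, star (wordOp V w) x ∈ K := by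
  simp [backwardCore, Submodule.mem_iInf]

theorem backwardCore_le (V : ι → H →L[ℂ] H) (K : Submodule ℂ H) : backwardCore V K ≤ K :=
  fun _ hx => by simpa using mem_backwardCore.1 hx []

namespace IsRowIsometry

theorem isReducing_backwardCore (hV : IsRowIsometry V) (hK : IsClosed (K : Set H))
    (hKV : ∀ a, ∀ x ∈ K, V a x ∈ K) : IsReducing V (backwardCore V K) where
  isClosed := by
    simp only [backwardCore, Submodule.coe_iInf]
    exact isClosed_iInter fun w => hK.preimage (star (wordOp V w)).continuous
  apply_mem a x hx := by
    refine mem_backwardCore.2 fun w => ?_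
    cases w with
    | nil => simpa using hKV a x (backwardCore_le V K hx)
    | cons b w =>
      rw [wordOp_cons, star_mul, mul_apply_eq_comp, hV.star_apply_apply]
      split_ifs
      · exact mem_backwardCore.1 hx w
      · simp
  star_apply_mem a x hx := mem_backwardCore.2 fun w => by
    simpa [wordOp_cons] using mem_backwardCore.1 hx (a :: w)

theorem orthogonal_inf_le_wanderingSpan (hV : IsRowIsometry V) (hKV : ∀ a, ∀ x ∈ K, V a x ∈ K)
    {K₁ : Submodule ℂ H} (hK₁ : ∀ a, ∀ x ∈ K, V a x ∈ K₁) : K₁ᗮ ⊓ K ≤ wanderingSpan V K := by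
  rintro ξ ⟨hξ₁, hξ⟩
  rcases eq_or_ne ξ 0 with rfl | h0
  · exact zero_mem _
  have hζ := hV.isWandering_smul h0 fun w hw => by
    obtain ⟨b, w, rfl⟩ := List.exists_cons_of_ne_nil hw
    rw [wordOp_cons_apply]
    exact hξ₁ _ (hK₁ b _ (wordOp_mem hKV w hξ))
  exact (Submodule.smul_mem_iff _ (by simpa using h0)).1
    (hζ.mem_wanderingSpan (K.smul_mem _ hξ))

theorem star_apply_mem_of_mem_orthogonal (hV : IsRowIsometry V) (hK : IsClosed (K : Set H))
    (hKV : ∀ a, ∀ x ∈ K, V a x ∈ K) {x : H} (hx : x ∈ K) (hxo : x ∈ (wanderingSpan V K)ᗮ)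
    (a : ι) : star (V a) x ∈ K := by
  let K₁ : Submodule ℂ H := K ⊓ ⨅ a, K.comap (star (V a)).toLinearMap
  have mem_K₁ : ∀ y, y ∈ K₁ ↔ y ∈ K ∧ ∀ a, star (V a) y ∈ K := fun y => by
    simp [K₁, Submodule.mem_iInf]
  have hK₁ : IsClosed (K₁ : Set H) := by
    simp only [K₁, Submodule.coe_inf, Submodule.coe_iInf]
    exact hK.inter (isClosed_iInter fun a => hK.preimage (star (V a)).continuous)
  have := hK₁.completeSpace_coe
  have hKK₁ : ∀ b, ∀ y ∈ K, V b y ∈ K₁ := fun b y hy => (mem_K₁ _).2 ⟨hKV b y hy, fun c => by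
    rw [hV.star_apply_apply]
    split_ifs <;> simp [hy]⟩
  rw [← Submodule.sup_orthogonal_inf_of_hasOrthogonalProjection (inf_le_left : K₁ ≤ K)] at hx
  obtain ⟨y, hy, z, hz, rfl⟩ := Submodule.mem_sup.1 hx
  have hz0 : z = 0 := by
    have h := hxo z (hV.orthogonal_inf_le_wanderingSpan hKV hKK₁ hz)
    rwa [inner_add_right, Submodule.inner_left_of_mem_orthogonal hy hz.1, zero_add,
      inner_self_eq_zero] at h
  rw [hz0, add_zero]
  exact ((mem_K₁ y).1 hy).2 a

theorem inf_orthogonal_wanderingSpan_le (hV : IsRowIsometry V) (hK : IsClosed (K : Set H))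
    (hKV : ∀ a, ∀ x ∈ K, V a x ∈ K) : K ⊓ (wanderingSpan V K)ᗮ ≤ backwardCore V K := by
  rintro x ⟨hx, hxo⟩
  refine mem_backwardCore.2 fun w => ?_
  induction w generalizing x with
  | nil => simpa using hx
  | cons a w ih =>
    rw [wordOp_cons, star_mul]
    exact ih (hV.star_apply_mem_of_mem_orthogonal hK hKV hx hxo a) fun z hz =>
      (inner_star_apply (V a) z x).trans (hxo _ (hV.apply_mem_wanderingSpan hKV a hz))

theorem le_wanderingSpan_of_backwardCore_eq_bot (hV : IsRowIsometry V)
    (hK : IsClosed (K : Set H)) (hKV : ∀ a, ∀ x ∈ K, V a x ∈ K) (h : backwardCore V K = ⊥) :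
    K ≤ wanderingSpan V K := by
  have := (isClosed_wanderingSpan V K).completeSpace_coe
  have hle : wanderingSpan V K ≤ K := wanderingSpan_le hK fun ζ hζ _ => hζ
  have hbot : (wanderingSpan V K)ᗮ ⊓ K = ⊥ := by
    rw [inf_comm, eq_bot_iff, ← h]
    exact hV.inf_orthogonal_wanderingSpan_le hK hKV
  have hsup := Submodule.sup_orthogonal_inf_of_hasOrthogonalProjection hle
  rw [hbot, sup_bot_eq] at hsup
  exact hsup.ge

end IsRowIsometry

end Wold

section DefectFree

variable {H : Type*} [NormedAddCommGroup H] [InnerProductSpace ℂ H] [CompleteSpace H]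
  {ι : Type*} [Fintype ι] {V : ι → H →L[ℂ] H}

theorem inner_sum_apply_star_apply (V : ι → H →L[ℂ] H) (y : H) :
    ⟪∑ a, V a (star (V a) y), y⟫ = ((∑ a, ‖star (V a) y‖ ^ 2 : ℝ) : ℂ) := by
  rw [sum_inner, Complex.ofReal_sum]
  refine Finset.sum_congr rfl fun a _ => ?_
  rw [← inner_star_apply, inner_self_eq_norm_sq_to_K]
  norm_cast

theorem IsRowIsometry.sum_norm_star_sq_le (hV : IsRowIsometry V) (y : H) :
    ∑ a, ‖star (V a) y‖ ^ 2 ≤ ‖y‖ ^ 2 := by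
  set z := ∑ a, V a (star (V a) y) with hz
  have hstar : ∀ a, star (V a) (y - z) = 0 := fun a => by
    simp [hz, hV.star_apply_apply]
  have horth : ⟪z, y - z⟫ = 0 := by
    rw [hz, sum_inner]
    exact Finset.sum_eq_zero fun a _ => by rw [← inner_star_apply, hstar, inner_zero_right]
  have hzz : ‖z‖ ^ 2 = ∑ a, ‖star (V a) y‖ ^ 2 := by
    rw [inner_sub_right, sub_eq_zero, inner_sum_apply_star_apply, inner_self_eq_norm_sq_to_K]
      at horth
    exact Complex.ofReal_injective (by simpa using horth.symm)
  have hy := norm_add_sq_eq_norm_sq_add_norm_sq_of_inner_eq_zero z (y - z) horth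
  rw [add_sub_cancel] at hy
  nlinarith [norm_nonneg (y - z)]

theorem sum_apply_star_apply (hC : ∑ a, V a * star (V a) = 1) (y : H) :
    ∑ a, V a (star (V a) y) = y := by
  simpa using congrArg (fun A : H →L[ℂ] H => A y) hC

theorem sum_norm_star_sq (hC : ∑ a, V a * star (V a) = 1) (y : H) :
    ∑ a, ‖star (V a) y‖ ^ 2 = ‖y‖ ^ 2 := by
  have h := inner_sum_apply_star_apply V y
  rw [sum_apply_star_apply hC, inner_self_eq_norm_sq_to_K] at h
  exact Complex.ofReal_injective (by simpa using h.symm)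

theorem sum_fnWordOp_mul_star (hC : ∑ a, V a * star (V a) = 1) (r : ℕ) :
    ∑ u : Fin r → ι, fnWordOp V u * star (fnWordOp V u) = 1 := by
  induction r with
  | zero => simp [fnWordOp]
  | succ r ih =>
    rw [← (Fin.consEquiv fun _ => ι).sum_comp, Fintype.sum_prod_type]
    calc ∑ a, ∑ u : Fin r → ι, fnWordOp V (Fin.cons a u) * star (fnWordOp V (Fin.cons a u))
        = ∑ a, V a * (∑ u : Fin r → ι, fnWordOp V u * star (fnWordOp V u)) * star (V a) := by
          simp only [fnWordOp, List.ofFn_cons, wordOp_cons, star_mul, Finset.mul_sum,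
            Finset.sum_mul, mul_assoc]
      _ = 1 := by simp only [ih, mul_one, hC]

end DefectFree

section Fock

/-- The full Fock space with orthonormal basis indexed by the words over `ι`. -/
abbrev Fock (ι : Type*) := lp (fun _ : List ι => ℂ) 2

namespace Fock

variable {ι : Type*}

/-- The standard basis vector of a word; `vec []` is the vacuum vector. -/
def vec (w : List ι) : Fock ι := lp.single 2 w 1

theorem inner_vec_left (w : List ι) (f : Fock ι) : ⟪vec w, f⟫ = f w := by
  simp [vec, lp.inner_single_left]

theorem inner_vec_vec (w w' : List ι) :
    ⟪(vec w : Fock ι), vec w'⟫ = if w = w' then 1 else 0 := by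
  rw [inner_vec_left, vec, lp.single_apply, Pi.single_apply]

theorem ext_inner {f g : Fock ι} (h : ∀ w, ⟪vec w, f⟫ = ⟪vec w, g⟫) : f = g := by
  ext w
  rw [← inner_vec_left, ← inner_vec_left, h]

theorem norm_vec (w : List ι) : ‖(vec w : Fock ι)‖ = 1 := by
  rw [vec, lp.norm_single (by norm_num), norm_one]

theorem orthonormal_vec : Orthonormal ℂ (vec : List ι → Fock ι) :=
  orthonormal_iff_ite.2 inner_vec_vec

theorem hasSum_vec (f : Fock ι) : HasSum (fun w => f w • vec w) f := by
  convert lp.hasSum_single (by norm_num) f using 2 with w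
  rw [vec, ← lp.single_smul, smul_eq_mul, mul_one]

theorem exists_finset_norm_sub_lt (f : Fock ι) {ε : ℝ} (hε : 0 < ε) :
    ∃ F : Finset (List ι), ‖f - ∑ w ∈ F, f w • vec w‖ < ε := by
  obtain ⟨F, hF⟩ := (Metric.tendsto_nhds.1 (hasSum_vec f) ε hε).exists
  exact ⟨F, by rwa [dist_comm, dist_eq_norm] at hF⟩

theorem exists_norm_sub_lt_of_length (f : Fock ι) {ε : ℝ} (hε : 0 < ε) :
    ∃ (g : Fock ι) (N : ℕ), ‖f - g‖ < ε ∧ ∀ w : List ι, N ≤ w.length → ⟪vec w, g⟫ = 0 := by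
  obtain ⟨F, hF⟩ := exists_finset_norm_sub_lt f hε
  refine ⟨_, F.sup List.length + 1, hF, fun w hw => ?_⟩
  rw [inner_sum]
  refine Finset.sum_eq_zero fun w' hw' => ?_
  have hlt : w'.length < w.length :=
    (Nat.lt_succ_of_le (Finset.le_sup (f := List.length) hw')).trans_le hw
  have hne : w ≠ w' := by rintro rfl; exact hlt.false
  rw [inner_smul_right, inner_vec_vec, if_neg hne, mul_zero]

section Maps

variable {E : Type*} [NormedAddCommGroup E] [InnerProductSpace ℂ E]

theorem clm_ext {A B : Fock ι →L[ℂ] E} (h : ∀ w, A (vec w) = B (vec w)) : A = B := by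
  ext f
  refine ((hasSum_vec f).mapL A).unique ?_
  simpa [h] using (hasSum_vec f).mapL B

variable [CompleteSpace E]

/-- The isometry sending the standard basis to a given orthonormal family. -/
def ofOrthonormal {v : List ι → E} (hv : Orthonormal ℂ v) : Fock ι →ₗᵢ[ℂ] E :=
  hv.orthogonalFamily.linearIsometry

theorem ofOrthonormal_vec {v : List ι → E} (hv : Orthonormal ℂ v) (w : List ι) :
    ofOrthonormal hv (vec w) = v w := by
  rw [ofOrthonormal, vec, OrthogonalFamily.linearIsometry_apply_single]
  simp

theorem norm_inner_apply_vec_le (X : Fock ι →L[ℂ] E) (w : List ι) (y : E) :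
    ‖⟪y, X (vec w)⟫‖ ≤ ‖ContinuousLinearMap.adjoint X y‖ := by
  rw [← ContinuousLinearMap.adjoint_inner_left]
  simpa [norm_vec] using norm_inner_le_norm (𝕜 := ℂ) (ContinuousLinearMap.adjoint X y) (vec w)

end Maps

/-- The left creation operator `e_w ↦ e_{aw}`. -/
def left (a : ι) : Fock ι →L[ℂ] Fock ι :=
  (ofOrthonormal (orthonormal_vec.comp (List.cons a) List.cons_injective)).toContinuousLinearMap

theorem left_vec (a : ι) (w : List ι) : left a (vec w) = vec (a :: w) :=
  ofOrthonormal_vec (orthonormal_vec.comp (List.cons a) List.cons_injective) w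

theorem wordOp_left_vec (u w : List ι) : wordOp left u (vec w) = vec (u ++ w) := by
  induction u with
  | nil => simp
  | cons a u ih => rw [wordOp_cons_apply, ih, left_vec, List.cons_append]

/-- The right creation operator `e_w ↦ e_{wu}`. -/
def right (u : List ι) : Fock ι →L[ℂ] Fock ι :=
  (ofOrthonormal
    (orthonormal_vec.comp (· ++ u) (List.append_left_injective u))).toContinuousLinearMap

theorem right_vec (u w : List ι) : right u (vec w) = vec (w ++ u) :=
  ofOrthonormal_vec (orthonormal_vec.comp (· ++ u) (List.append_left_injective u)) w

theorem norm_right_apply (u : List ι) (f : Fock ι) : ‖right u f‖ = ‖f‖ :=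
  LinearIsometry.norm_map _ f

theorem star_left_vec_nil (a : ι) : star (left a) (vec []) = 0 :=
  ext_inner fun w => by
    rw [inner_star_apply, left_vec, inner_vec_vec, if_neg (List.cons_ne_nil a w), inner_zero_right]

theorem star_left_vec_cons (a b : ι) (w : List ι) :
    star (left a) (vec (b :: w)) = if a = b then vec w else 0 :=
  ext_inner fun w' => by
    rw [inner_star_apply, left_vec, inner_vec_vec]
    split_ifs <;> simp_all [inner_vec_vec, norm_vec]

theorem isRowIsometry_left : IsRowIsometry (left : ι → Fock ι →L[ℂ] Fock ι) :=
  fun a b => clm_ext fun w => by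
    rw [mul_apply_eq_comp, left_vec, star_left_vec_cons]
    split_ifs <;> simp

theorem inner_vec_nil_left (a : ι) (f : Fock ι) : ⟪vec [], left a f⟫ = 0 := by
  rw [← star_star (left a), inner_star_apply, star_left_vec_nil, inner_zero_left]

theorem inner_vec_cons_left (a b : ι) (w : List ι) (f : Fock ι) :
    ⟪vec (b :: w), left a f⟫ = if b = a then ⟪vec w, f⟫ else 0 := by
  rw [← left_vec, isRowIsometry_left.inner_apply_apply]

theorem norm_star_right_le (u : List ι) (f : Fock ι) : ‖star (right u) f‖ ≤ ‖f‖ := by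
  refine ((star (right u)).le_opNorm f).trans (mul_le_of_le_one_left (norm_nonneg f) ?_)
  rw [ContinuousLinearMap.star_eq_adjoint, LinearIsometryEquiv.norm_map]
  exact (right u).opNorm_le_bound zero_le_one fun g => by rw [norm_right_apply, one_mul]

theorem eventually_norm_star_right_lt (f : Fock ι) {ε : ℝ} (hε : 0 < ε) :
    ∀ᶠ r in Filter.atTop, ∀ u : List ι, r ≤ u.length → ‖star (right u) f‖ < ε := by
  obtain ⟨g, N, hfg, hg⟩ := exists_norm_sub_lt_of_length f hε
  filter_upwards [Filter.eventually_ge_atTop N] with r hr u hu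
  have hzero : star (right u) g = 0 := ext_inner fun w => by
    rw [inner_star_apply, right_vec, hg _ (by simp; lia), inner_zero_right]
  calc ‖star (right u) f‖ = ‖star (right u) (f - g)‖ := by rw [map_sub, hzero, sub_zero]
    _ ≤ ‖f - g‖ := norm_star_right_le u _
    _ < ε := hfg

theorem exists_sum_norm_star_fnWordOp_left_sq_lt [Fintype ι] (f : Fock ι) {ε : ℝ} (hε : 0 < ε) :
    ∃ r, ∑ u : Fin r → ι, ‖star (fnWordOp left u) f‖ ^ 2 < ε := by
  obtain ⟨g, N, hfg, hg⟩ := exists_norm_sub_lt_of_length f (Real.sqrt_pos.2 hε)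
  have hzero : ∀ u : Fin N → ι, star (fnWordOp left u) g = 0 := fun u => ext_inner fun w => by
    rw [inner_star_apply, fnWordOp, wordOp_left_vec, hg _ (by simp), inner_zero_right]
  refine ⟨N, ?_⟩
  calc ∑ u : Fin N → ι, ‖star (fnWordOp left u) f‖ ^ 2
      = ∑ u : Fin N → ι, ‖star (fnWordOp left u) (f - g)‖ ^ 2 := by
        simp only [map_sub, hzero, sub_zero]
    _ ≤ ‖f - g‖ ^ 2 := (isRowIsometry_left.fnWordOp N).sum_norm_star_sq_le _
    _ < ε := (Real.lt_sqrt (norm_nonneg _)).1 hfg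

end Fock

end Fock

section Intertwiners

open ContinuousLinearMap

variable {H : Type*} [NormedAddCommGroup H] [InnerProductSpace ℂ H]
  {ι : Type*} {V : ι → H →L[ℂ] H} {X : Fock ι →L[ℂ] H}

/-- The bounded operators from Fock space intertwining the left creation operators with `V`. Such
an operator is determined by the image `X (vec [])` of the vacuum vector. -/
def intertwiners (V : ι → H →L[ℂ] H) : Submodule ℂ (Fock ι →L[ℂ] H) where
  carrier := {X | ∀ a, X ∘L Fock.left a = V a ∘L X}
  add_mem' hX hY a := by rw [add_comp, comp_add, hX a, hY a]
  zero_mem' a := by rw [zero_comp, comp_zero]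
  smul_mem' c X hX a := by rw [smul_comp, comp_smul, hX a]

/-- The absolutely continuous vectors of `V`, encoded as the images of the vacuum vector under
intertwiners; equivalently, the vectors `x` for which `(V_w x)_w` is a Bessel family. -/
def acVectors (V : ι → H →L[ℂ] H) : Submodule ℂ H :=
  (intertwiners V).map (ContinuousLinearMap.apply ℂ H (Fock.vec [] : Fock ι)).toLinearMap

theorem mem_acVectors {x : H} : x ∈ acVectors V ↔ ∃ X ∈ intertwiners V, X (Fock.vec []) = x :=
  Iff.rfl

namespace intertwiners

theorem apply_left (hX : X ∈ intertwiners V) (a : ι) (f : Fock ι) :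
    X (Fock.left a f) = V a (X f) :=
  congrArg (fun A : Fock ι →L[ℂ] H => A f) (hX a)

theorem apply_wordOp_left (hX : X ∈ intertwiners V) (w : List ι) (f : Fock ι) :
    X (wordOp Fock.left w f) = wordOp V w (X f) := by
  induction w with
  | nil => simp
  | cons a w ih => rw [wordOp_cons_apply, apply_left hX, ih, wordOp_cons_apply]

theorem apply_vec (hX : X ∈ intertwiners V) (w : List ι) :
    X (Fock.vec w) = wordOp V w (X (Fock.vec [])) := by
  rw [← apply_wordOp_left hX, Fock.wordOp_left_vec, List.append_nil]

theorem of_apply_vec {x : H} (h : ∀ w, X (Fock.vec w) = wordOp V w x) : X ∈ intertwiners V :=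
  fun a => Fock.clm_ext fun w => by
    rw [comp_apply, comp_apply, Fock.left_vec, h, h, wordOp_cons_apply]

theorem comp_right (hX : X ∈ intertwiners V) (u : List ι) :
    X ∘L Fock.right u ∈ intertwiners V :=
  of_apply_vec (x := X (Fock.vec u)) fun w => by
    rw [comp_apply, Fock.right_vec, apply_vec hX, wordOp_append_apply, ← apply_vec hX]

theorem comp_left (hX : X ∈ intertwiners V) {A : H →L[ℂ] H}
    (hA : ∀ a x, A (V a x) = V a (A x)) : A ∘L X ∈ intertwiners V :=
  fun a => ContinuousLinearMap.ext fun f => by simp only [comp_apply, apply_left hX, hA]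

theorem apply_mem (hX : X ∈ intertwiners V) {M : Submodule ℂ H} (hM : IsClosed (M : Set H))
    (hMV : ∀ a, ∀ x ∈ M, V a x ∈ M) (hx : X (Fock.vec []) ∈ M) (f : Fock ι) : X f ∈ M := by
  refine hM.mem_of_tendsto ((Fock.hasSum_vec f).mapL X) (Filter.Eventually.of_forall fun F => ?_)
  refine M.sum_mem fun w _ => ?_
  rw [map_smul, apply_vec hX]
  exact M.smul_mem _ (wordOp_mem hMV w hx)

variable [CompleteSpace H]

theorem inner_vec_adjoint (hX : X ∈ intertwiners V) (w : List ι) (y : H) :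
    ⟪Fock.vec w, adjoint X y⟫ = ⟪wordOp V w (X (Fock.vec [])), y⟫ := by
  rw [adjoint_inner_right, apply_vec hX]

theorem adjoint_star_wordOp (hX : X ∈ intertwiners V) (w : List ι) (y : H) :
    adjoint X (star (wordOp V w) y) = star (wordOp Fock.left w) (adjoint X y) :=
  ext_inner_left ℂ fun f => by
    rw [adjoint_inner_right, inner_star_apply, inner_star_apply, adjoint_inner_right,
      apply_wordOp_left hX]

theorem adjoint_apply (hV : IsRowIsometry V) (hX : X ∈ intertwiners V) (a : ι) (y : H) :
    adjoint X (V a y) = Fock.left a (adjoint X y) + ⟪X (Fock.vec []), V a y⟫ • Fock.vec [] := by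
  refine Fock.ext_inner fun w => ?_
  rw [inner_vec_adjoint hX, inner_add_right, inner_smul_right]
  cases w with
  | nil => simp [Fock.inner_vec_nil_left, Fock.norm_vec]
  | cons b w =>
    rw [Fock.inner_vec_cons_left, Fock.inner_vec_vec, if_neg (List.cons_ne_nil b w), mul_zero,
      add_zero, wordOp_cons_apply, hV.inner_apply_apply, inner_vec_adjoint hX]

theorem norm_adjoint_apply_le (hV : IsRowIsometry V) (hX : X ∈ intertwiners V) (a : ι) (y : H) :
    ‖adjoint X (V a y)‖ ≤ ‖adjoint X y‖ + ‖⟪X (Fock.vec []), V a y⟫‖ := by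
  rw [adjoint_apply hV hX]
  refine (norm_add_le _ _).trans_eq ?_
  rw [Fock.isRowIsometry_left.norm_apply, norm_smul, Fock.norm_vec, mul_one]

theorem norm_adjoint_wordOp_replicate_le (hV : IsRowIsometry V) (hX : X ∈ intertwiners V) {b : ι}
    (hb : star (V b) (X (Fock.vec [])) = 0) (k : ℕ) (y : H) :
    ‖adjoint X (wordOp V (List.replicate k b) y)‖ ≤ ‖adjoint X y‖ := by
  induction k with
  | zero => simp
  | succ k ih =>
    rw [List.replicate_succ, wordOp_cons_apply]
    refine (norm_adjoint_apply_le hV hX b _).trans ?_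
    rw [norm_inner_symm, ← inner_star_apply, hb]
    simpa using ih

end intertwiners

variable [CompleteSpace H]

theorem IsWandering.exists_isometry_mem_intertwiners {ζ : H} (hζ : IsWandering V ζ) :
    ∃ Z : Fock ι →ₗᵢ[ℂ] H, Z.toContinuousLinearMap ∈ intertwiners V ∧ Z (Fock.vec []) = ζ :=
  have h : Orthonormal ℂ fun w => wordOp V w ζ := orthonormal_iff_ite.2 hζ.2
  ⟨Fock.ofOrthonormal h, intertwiners.of_apply_vec (Fock.ofOrthonormal_vec h),
    Fock.ofOrthonormal_vec h []⟩

end Intertwiners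

section LowerBound

open ContinuousLinearMap

theorem mul_norm_le_norm_apply_of_mem_topologicalClosure {E F : Type*} [NormedAddCommGroup E]
    [NormedSpace ℂ E] [NormedAddCommGroup F] [NormedSpace ℂ F] (A : E →L[ℂ] F)
    {D : Submodule ℂ E} {δ : ℝ} (h : ∀ y ∈ D, ‖y‖ = 1 → δ ≤ ‖A y‖) {y : E}
    (hy : y ∈ D.topologicalClosure) : δ * ‖y‖ ≤ ‖A y‖ := by
  refine closure_minimal (t := {y | δ * ‖y‖ ≤ ‖A y‖}) (fun y hy => ?_)
    (isClosed_le (by fun_prop) (by fun_prop)) hy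
  rcases eq_or_ne y 0 with rfl | hy0
  · simp
  have hunit := h ((‖y‖⁻¹ : ℂ) • y) (D.smul_mem _ hy) (by rw [norm_smul]; simp [hy0])
  rw [map_smul, norm_smul, norm_inv, Complex.norm_real, norm_norm, inv_mul_eq_div,
    le_div_iff₀ (norm_pos_iff.2 hy0)] at hunit
  exact hunit

variable {H : Type*} [NormedAddCommGroup H] [InnerProductSpace ℂ H] [CompleteSpace H]
  {ι : Type*} [Fintype ι] {V : ι → H →L[ℂ] H} {M : Submodule ℂ H} {X : Fock ι →L[ℂ] H}

/-- The adjoint of an intertwiner turns `V_u*` into backward shifts, and these tend strongly to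
zero on Fock space, whereas `∑ ‖V_u* y‖² = ‖y‖²` when `V` is defect free. -/
theorem eq_bot_of_mul_norm_le_norm_adjoint (hC : ∑ a, V a * star (V a) = 1)
    (hMs : ∀ a, ∀ x ∈ M, star (V a) x ∈ M) (hX : X ∈ intertwiners V) {δ : ℝ} (hδ : 0 < δ)
    (h : ∀ y ∈ M, δ * ‖y‖ ≤ ‖adjoint X y‖) : M = ⊥ := by
  refine (Submodule.eq_bot_iff M).2 fun y hy => ?_
  by_contra hy0
  have hpos : 0 < δ * ‖y‖ := mul_pos hδ (norm_pos_iff.2 hy0)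
  obtain ⟨r, hr⟩ := Fock.exists_sum_norm_star_fnWordOp_left_sq_lt (adjoint X y) (pow_pos hpos 2)
  refine hr.not_ge ?_
  calc (δ * ‖y‖) ^ 2 = ∑ u : Fin r → ι, (δ * ‖star (fnWordOp V u) y‖) ^ 2 := by
        simp only [mul_pow, ← Finset.mul_sum, sum_norm_star_sq (sum_fnWordOp_mul_star hC r)]
    _ ≤ ∑ u : Fin r → ι, ‖star (fnWordOp Fock.left u) (adjoint X y)‖ ^ 2 := by
        refine Finset.sum_le_sum fun u _ => pow_le_pow_left₀ (by positivity) ?_ 2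
        rw [fnWordOp, fnWordOp, ← intertwiners.adjoint_star_wordOp hX]
        exact h _ (star_wordOp_mem hMs _ hy)

theorem exists_norm_adjoint_le (hC : ∑ a, V a * star (V a) = 1)
    (hMs : ∀ a, ∀ x ∈ M, star (V a) x ∈ M) (hMd : M ≤ (acVectors V ⊓ M).topologicalClosure)
    (hM0 : M ≠ ⊥) (hX : X ∈ intertwiners V) {δ : ℝ} (hδ : 0 < δ) :
    ∃ q ∈ acVectors V ⊓ M, ‖q‖ = 1 ∧ ‖adjoint X q‖ ≤ δ := by
  by_contra! hcon
  exact hM0 (eq_bot_of_mul_norm_le_norm_adjoint hC hMs hX hδ fun y hy =>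
    mul_norm_le_norm_apply_of_mem_topologicalClosure _ (fun q hq hq1 => (hcon q hq hq1).le)
      (hMd hy))

end LowerBound

section AlmostIsometric

open ContinuousLinearMap

variable {H : Type*} [NormedAddCommGroup H] [InnerProductSpace ℂ H] [CompleteSpace H]
  {ι : Type*} {V : ι → H →L[ℂ] H} {X P : Fock ι →L[ℂ] H}

namespace IsRowIsometry

theorem inner_wordOp_replicate_eq_zero (hV : IsRowIsometry V) {a b : ι} (hab : a ≠ b) (y z : H)
    (v : List ι) {r : ℕ} (h : v.length < r) :
    ⟪wordOp V (List.replicate r b) y, wordOp V v (V a z)⟫ = 0 := by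
  induction v generalizing r with
  | nil =>
    obtain ⟨r, rfl⟩ := Nat.exists_eq_succ_of_ne_zero h.ne'
    rw [List.replicate_succ, wordOp_cons_apply, wordOp_nil, one_apply_eq_self,
      hV.inner_apply_apply, if_neg hab.symm]
  | cons c v ih =>
    obtain ⟨r, rfl⟩ := Nat.exists_eq_succ_of_ne_zero (Nat.ne_zero_of_lt h)
    rw [List.replicate_succ, wordOp_cons_apply, wordOp_cons_apply, hV.inner_apply_apply,
      ih (by simpa using h), ite_self]

/-- The word `a bʳ` does not overlap its translates by words of length at most `r`. -/
theorem inner_wordOp_cons_replicate_eq_zero (hV : IsRowIsometry V) {a b : ι} (hab : a ≠ b)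
    (q : H) {v : List ι} (hv : v ≠ []) {r : ℕ} (h : v.length ≤ r) :
    ⟪wordOp V (a :: List.replicate r b) q, wordOp V v (wordOp V (a :: List.replicate r b) q)⟫
      = 0 := by
  obtain ⟨c, v, rfl⟩ := List.exists_cons_of_ne_nil hv
  rw [wordOp_cons_apply, wordOp_cons_apply, hV.inner_apply_apply,
    hV.inner_wordOp_replicate_eq_zero hab _ _ v (by simpa using h), ite_self]

end IsRowIsometry

namespace intertwiners

theorem norm_adjoint_apply_vec_le (hV : IsRowIsometry V) (hX : X ∈ intertwiners V)
    (hP : P ∈ intertwiners V) (v : List ι) :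
    ‖adjoint X (P (Fock.vec v))‖ ≤
      ‖adjoint X (P (Fock.vec []))‖ + v.length * ‖adjoint P (X (Fock.vec []))‖ := by
  induction v with
  | nil => simp
  | cons c v ih =>
    have hinner := Fock.norm_inner_apply_vec_le P (c :: v) (X (Fock.vec []))
    have hstep := norm_adjoint_apply_le hV hX c (P (Fock.vec v))
    rw [← apply_left hP, Fock.left_vec] at hstep
    rw [List.length_cons, Nat.cast_succ]
    linarith

theorem norm_adjoint_apply_vec_sub (hV : IsRowIsometry V) (hP : P ∈ intertwiners V) (v : List ι)
    (h : ∀ w ≠ [], w.length ≤ v.length →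
      ⟪P (Fock.vec []), wordOp V w (P (Fock.vec []))⟫ = 0) :
    ‖adjoint P (P (Fock.vec v)) - Fock.vec v‖ =
      ‖adjoint P (P (Fock.vec [])) - Fock.vec []‖ := by
  induction v with
  | nil => rfl
  | cons c v ih =>
    have hzero := h (c :: v) (List.cons_ne_nil c v) le_rfl
    rw [← apply_vec hP, ← Fock.left_vec, apply_left hP] at hzero
    rw [← ih fun w hw hwv => h w hw (hwv.trans (by simp)), ← Fock.left_vec, apply_left hP,
      adjoint_apply hV hP, hzero, zero_smul, add_zero, ← map_sub,
      Fock.isRowIsometry_left.norm_apply]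

theorem norm_adjoint_wordOp_cons_replicate_le (hV : IsRowIsometry V) (hX : X ∈ intertwiners V)
    {b : ι} (hb : star (V b) (X (Fock.vec [])) = 0) (a : ι) (r : ℕ) (q : H) :
    ‖adjoint X (wordOp V (a :: List.replicate r b) q)‖ ≤
      ‖adjoint X q‖ + ‖⟪X (Fock.vec []), wordOp V (a :: List.replicate r b) q⟫‖ := by
  rw [wordOp_cons_apply]
  refine (norm_adjoint_apply_le hV hX a _).trans ?_
  gcongr
  exact norm_adjoint_wordOp_replicate_le hV hX hb r q

theorem norm_adjoint_apply_vec_nil_sub_le (hV : IsRowIsometry V) (hP : P ∈ intertwiners V)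
    {a b : ι} (hab : a ≠ b) {r : ℕ} {q : H} (hq : ‖q‖ = 1)
    (hPq : P (Fock.vec []) = wordOp V (a :: List.replicate r b) q) :
    ‖adjoint P (P (Fock.vec [])) - Fock.vec []‖ ≤ ‖adjoint P q‖ := by
  have hunit : ⟪P (Fock.vec []), P (Fock.vec [])⟫ = 1 := by
    rw [hPq, inner_self_eq_norm_sq_to_K, hV.norm_wordOp, hq]; simp
  have hb : star (V b) (P (Fock.vec [])) = 0 := by
    rw [hPq, wordOp_cons_apply, hV.star_apply_apply, if_neg hab.symm]
  have hadj := adjoint_apply hV hP a (wordOp V (List.replicate r b) q)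
  rw [← wordOp_cons_apply, ← hPq, hunit, one_smul] at hadj
  rw [hadj, add_sub_cancel_right, Fock.isRowIsometry_left.norm_apply]
  exact norm_adjoint_wordOp_replicate_le hV hP hb r q

end intertwiners

variable [Fintype ι] {M : Submodule ℂ H}

/-- Take a unit vector `q` on which `X*` is small. For `a ≠ b` and large `r` the orbit of
`V_a V_bʳ q` is almost orthonormal, and `X*` is still small on it. -/
theorem exists_almost_isometric_intertwiner (hV : IsRowIsometry V)
    (hC : ∑ a, V a * star (V a) = 1) (hM : IsReducing V M)
    (hMd : M ≤ (acVectors V ⊓ M).topologicalClosure) (hM0 : M ≠ ⊥) {a b : ι} (hab : a ≠ b)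
    (hX : X ∈ intertwiners V) (hb : star (V b) (X (Fock.vec [])) = 0) (y : H) (N : ℕ)
    {ε : ℝ} (hε : 0 < ε) :
    ∃ P ∈ intertwiners V, P (Fock.vec []) ∈ M ∧ ‖P (Fock.vec [])‖ = 1 ∧
      star (V b) (P (Fock.vec [])) = 0 ∧ ‖adjoint P y‖ ≤ ε ∧
      ∀ v : List ι, v.length ≤ N → ‖adjoint X (P (Fock.vec v))‖ ≤ ε ∧
        ‖adjoint P (P (Fock.vec v)) - Fock.vec v‖ ≤ ε := by
  obtain ⟨q, ⟨hqac, hqM⟩, hq, hXq⟩ :=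
    exists_norm_adjoint_le hC hM.star_apply_mem hMd hM0 hX (half_pos hε)
  obtain ⟨Q, hQ, hQq⟩ := mem_acVectors.1 hqac
  set δ := ε / (2 * (N + 1)) with hδ
  have hδ0 : 0 < δ := by positivity
  have hNδ : (N + 1) * δ = ε / 2 := by rw [hδ]; field_simp
  have hδε : δ ≤ ε := by nlinarith [mul_nonneg N.cast_nonneg hδ0.le]
  have small (z : H) := Fock.eventually_norm_star_right_lt (adjoint Q z) hδ0
  obtain ⟨r, hrN, hrx, hrq, hry⟩ := ((Filter.eventually_ge_atTop N).and
    ((small (X (Fock.vec []))).and ((small q).and (small y)))).exists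
  set u := a :: List.replicate r b with hu
  have hru : r ≤ u.length := by simp [hu]
  have hP : Q ∘L Fock.right u ∈ intertwiners V := intertwiners.comp_right hQ u
  have hPq : (Q ∘L Fock.right u) (Fock.vec []) = wordOp V u q := by
    rw [comp_apply, Fock.right_vec, List.nil_append, intertwiners.apply_vec hQ, hQq]
  have hadj (z : H) : adjoint (Q ∘L Fock.right u) z = star (Fock.right u) (adjoint Q z) := by
    rw [adjoint_comp]; rfl
  refine ⟨_, hP, ?_, ?_, ?_, ?_, fun v hv => ⟨?_, ?_⟩⟩
  · rw [hPq]; exact wordOp_mem hM.apply_mem u hqM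
  · rw [hPq, hV.norm_wordOp, hq]
  · rw [hPq, hu, wordOp_cons_apply, hV.star_apply_apply, if_neg hab.symm]
  · rw [hadj]; exact (hry u hru).le.trans hδε
  · have hvN : (v.length : ℝ) ≤ N := mod_cast hv
    have hPx : ‖adjoint (Q ∘L Fock.right u) (X (Fock.vec []))‖ ≤ δ := by
      rw [hadj]; exact (hrx u hru).le
    have horbit := intertwiners.norm_adjoint_apply_vec_le hV hX hP v
    have hvac := intertwiners.norm_adjoint_wordOp_cons_replicate_le hV hX hb a r q
    have hinner := Fock.norm_inner_apply_vec_le (Q ∘L Fock.right u) [] (X (Fock.vec []))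
    rw [← hu, ← hPq] at hvac
    nlinarith [mul_le_mul hvN hPx (norm_nonneg _) N.cast_nonneg]
  · rw [intertwiners.norm_adjoint_apply_vec_sub hV hP v fun w hw hwv => by
      rw [hPq]; exact hV.inner_wordOp_cons_replicate_eq_zero hab q hw (hwv.trans (hv.trans hrN))]
    refine (intertwiners.norm_adjoint_apply_vec_nil_sub_le hV hP hab hq hPq).trans ?_
    rw [hadj]
    exact (hrq u hru).le.trans hδε

end AlmostIsometric

section Improvement

open ContinuousLinearMap

variable {H : Type*} [NormedAddCommGroup H] [InnerProductSpace ℂ H] {ι : Type*}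

theorem Fock.norm_apply_sum_smul_vec_le (A : Fock ι →L[ℂ] H) (F : Finset (List ι))
    (c : List ι → ℂ) {ε : ℝ} (h : ∀ v ∈ F, ‖A (Fock.vec v)‖ ≤ ε) :
    ‖A (∑ v ∈ F, c v • Fock.vec v)‖ ≤ (∑ v ∈ F, ‖c v‖) * ε := by
  rw [map_sum, Finset.sum_mul]
  refine norm_sum_le_of_le F fun v hv => ?_
  rw [map_smul, norm_smul]
  exact mul_le_mul_of_nonneg_left (h v hv) (norm_nonneg _)

variable [CompleteSpace H]

theorem norm_apply_le_add_norm_adjoint_apply_sub {E : Type*} [NormedAddCommGroup E]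
    [InnerProductSpace ℂ E] [CompleteSpace E] (P : E →L[ℂ] H) (g : E) :
    ‖P g‖ ≤ ‖g‖ + ‖adjoint P (P g) - g‖ := by
  have hPg : ‖P g‖ ^ 2 ≤ ‖adjoint P (P g)‖ * ‖g‖ := by
    rw [apply_norm_sq_eq_inner_adjoint_left P g]
    exact re_inner_le_norm _ _
  have htri : ‖adjoint P (P g)‖ ≤ ‖g‖ + ‖adjoint P (P g) - g‖ := norm_le_norm_add_norm_sub' _ _
  refine abs_le_of_sq_le_sq' ?_ (by positivity) |>.2
  nlinarith [norm_nonneg g, norm_nonneg (adjoint P (P g) - g)]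

theorem norm_sub_adjoint_add_smul_apply_le {E : Type*} [NormedAddCommGroup E]
    [InnerProductSpace ℂ E] [CompleteSpace E] (X P : E →L[ℂ] H) (e : E) (y : H) (g : E) {s : ℝ}
    (hs : 0 < s) :
    ‖e - adjoint (X + (s : ℂ) • P) (y + (s : ℂ)⁻¹ • P g)‖ ≤
      ‖e - adjoint X y - g‖ + s⁻¹ * ‖adjoint X (P g)‖ + s * ‖adjoint P y‖
        + ‖adjoint P (P g) - g‖ := by
  have hs0 : (s : ℂ) ≠ 0 := mod_cast hs.ne'
  have hsn : ‖(s : ℂ)‖ = s := by simp [hs.le]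
  have hadj : adjoint (X + (s : ℂ) • P) = adjoint X + (s : ℂ) • adjoint P := by
    rw [map_add, map_smulₛₗ, Complex.conj_ofReal]
  have hdecomp : e - adjoint (X + (s : ℂ) • P) (y + (s : ℂ)⁻¹ • P g) =
      (e - adjoint X y - g) - (s : ℂ)⁻¹ • adjoint X (P g) - (s : ℂ) • adjoint P y -
        (adjoint P (P g) - g) := by
    rw [hadj, add_apply, smul_apply, map_add, map_add, map_smul, map_smul, smul_add,
      smul_inv_smul₀ hs0]
    abel
  rw [hdecomp]
  refine norm_sub_le_of_le (norm_sub_le_of_le (norm_sub_le_of_le le_rfl ?_) ?_) le_rfl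
  · rw [norm_smul, norm_inv, hsn]
  · rw [norm_smul, hsn]

variable [Fintype ι] {V : ι → H →L[ℂ] H} {M : Submodule ℂ H} {X : Fock ι →L[ℂ] H}

theorem exists_intertwiner_almost_isometric_at (hV : IsRowIsometry V)
    (hC : ∑ a, V a * star (V a) = 1) (hM : IsReducing V M)
    (hMd : M ≤ (acVectors V ⊓ M).topologicalClosure) (hM0 : M ≠ ⊥) {a b : ι} (hab : a ≠ b)
    (hX : X ∈ intertwiners V) (hb : star (V b) (X (Fock.vec [])) = 0) (y : H)
    (F : Finset (List ι)) (c : List ι → ℂ) {ε : ℝ} (hε : 0 < ε) :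
    ∃ P ∈ intertwiners V, P (Fock.vec []) ∈ M ∧ ‖P (Fock.vec [])‖ = 1 ∧
      star (V b) (P (Fock.vec [])) = 0 ∧ ‖adjoint P y‖ ≤ ε ∧
      ‖adjoint X (P (∑ v ∈ F, c v • Fock.vec v))‖ ≤ ε ∧
      ‖adjoint P (P (∑ v ∈ F, c v • Fock.vec v)) - ∑ v ∈ F, c v • Fock.vec v‖ ≤ ε := by
  set C := ∑ v ∈ F, ‖c v‖
  have hC0 : 0 ≤ C := Finset.sum_nonneg fun v _ => norm_nonneg (c v)
  have hδε : ε / (C + 1) ≤ ε := div_le_self hε.le (by linarith)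
  have hCδ : C * (ε / (C + 1)) ≤ ε := by
    rw [mul_div_assoc', div_le_iff₀ (by positivity)]; nlinarith
  obtain ⟨P, hP, hPM, hP1, hPb, hPy, hPv⟩ := exists_almost_isometric_intertwiner hV hC hM hMd hM0
    hab hX hb y (F.sup List.length) (ε := ε / (C + 1)) (by positivity)
  have hPF (v) (hv : v ∈ F) := hPv v (Finset.le_sup (f := List.length) hv)
  refine ⟨P, hP, hPM, hP1, hPb, hPy.trans hδε, ?_, ?_⟩
  · exact (Fock.norm_apply_sum_smul_vec_le (adjoint X ∘L P) F c fun v hv => (hPF v hv).1).trans hCδ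
  · exact (Fock.norm_apply_sum_smul_vec_le (adjoint P ∘L P - 1) F c
      fun v hv => (hPF v hv).2).trans hCδ

/-- The correction is `X + s P` and `y + s⁻¹ P g`, where `g` approximates the error
`vec [] - X* y`: since `P* P g ≈ g` and the cross terms are negligible, it cancels the error. -/
theorem exists_intertwiner_improvement (hV : IsRowIsometry V)
    (hC : ∑ a, V a * star (V a) = 1) (hM : IsReducing V M)
    (hMd : M ≤ (acVectors V ⊓ M).topologicalClosure) (hM0 : M ≠ ⊥) {a b : ι} (hab : a ≠ b)
    (hX : X ∈ intertwiners V) (hXM : X (Fock.vec []) ∈ M)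
    (hb : star (V b) (X (Fock.vec [])) = 0) {y : H} {s η : ℝ} (hs : 0 < s) (hη : 0 < η)
    (hXy : ‖Fock.vec [] - adjoint X y‖ ≤ s ^ 2) :
    ∃ X' ∈ intertwiners V, X' (Fock.vec []) ∈ M ∧ star (V b) (X' (Fock.vec [])) = 0 ∧
      ∃ y', ‖X' (Fock.vec []) - X (Fock.vec [])‖ ≤ s ∧ ‖y' - y‖ ≤ 3 * s ∧
        ‖Fock.vec [] - adjoint X' y'‖ ≤ η := by
  set h := Fock.vec [] - adjoint X y
  obtain ⟨F, hF⟩ := Fock.exists_finset_norm_sub_lt h (lt_min (half_pos hη) (pow_pos hs 2))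
  set g := ∑ v ∈ F, h v • Fock.vec v
  set ε := min (s ^ 2) (η / 2 / (s⁻¹ + s + 1))
  have hε : 0 < ε := by positivity
  obtain ⟨P, hP, hPM, hP1, hPb, hPy, hXPg, hPPg⟩ :=
    exists_intertwiner_almost_isometric_at hV hC hM hMd hM0 hab hX hb y F h hε
  have hsn : ‖(s : ℂ)‖ = s := by simp [hs.le]
  refine ⟨X + (s : ℂ) • P, add_mem hX (Submodule.smul_mem _ _ hP), M.add_mem hXM (M.smul_mem _ hPM),
    by simp [hb, hPb], y + (s : ℂ)⁻¹ • P g, ?_, ?_, ?_⟩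
  · rw [add_apply, smul_apply, add_sub_cancel_left, norm_smul, hsn, hP1, mul_one]
  · rw [add_sub_cancel_left, norm_smul, norm_inv, hsn, inv_mul_le_iff₀ hs]
    have hPg := norm_apply_le_add_norm_adjoint_apply_sub P g
    have hg : ‖g‖ ≤ ‖h‖ + ‖h - g‖ := norm_le_norm_add_norm_sub _ _
    have hgs := hF.le.trans (min_le_right _ _)
    have hεs : ε ≤ s ^ 2 := min_le_left _ _
    linarith
  · have hεη : s⁻¹ * ε + s * ε + ε ≤ η / 2 := by
      have := min_le_right (s ^ 2) (η / 2 / (s⁻¹ + s + 1))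
      rw [le_div_iff₀ (by positivity)] at this
      linarith
    calc ‖Fock.vec [] - adjoint (X + (s : ℂ) • P) (y + (s : ℂ)⁻¹ • P g)‖
        ≤ ‖h - g‖ + s⁻¹ * ‖adjoint X (P g)‖ + s * ‖adjoint P y‖ + ‖adjoint P (P g) - g‖ :=
          norm_sub_adjoint_add_smul_apply_le X P _ y g hs
      _ ≤ η / 2 + s⁻¹ * ε + s * ε + ε := by
          gcongr
          exact hF.le.trans (min_le_left _ _)
      _ ≤ η := by linarith

end Improvement

section WanderingVectors

open ContinuousLinearMap Filter Topology

theorem exists_tendsto_of_forall_exists_dist_le {α : Type*} [PseudoMetricSpace α] [CompleteSpace α]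
    {Q : ℕ → α → Prop} {z₀ : α} (h₀ : Q 0 z₀) {C r : ℝ} (hr : r < 1)
    (hstep : ∀ n z, Q n z → ∃ z', Q (n + 1) z' ∧ dist z z' ≤ C * r ^ n) :
    ∃ (f : ℕ → α) (z : α), (∀ n, Q n (f n)) ∧ Tendsto f atTop (𝓝 z) := by
  have : Nonempty α := ⟨z₀⟩
  choose! next hnext hdist using hstep
  let f : ℕ → α := fun n => Nat.rec z₀ next n
  have hf (n : ℕ) : Q n (f n) := by
    induction n with
    | zero => exact h₀
    | succ n ih => exact hnext n _ ih
  obtain ⟨z, hz⟩ := cauchySeq_tendsto_of_complete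
    (cauchySeq_of_le_geometric r C hr fun n => hdist n _ (hf n))
  exact ⟨f, z, hf, hz⟩

variable {H : Type*} [NormedAddCommGroup H] [InnerProductSpace ℂ H] [CompleteSpace H]
  {ι : Type*} {V : ι → H →L[ℂ] H} {M : Submodule ℂ H}

theorem IsRowIsometry.exists_isWandering_of_biorthogonal (hV : IsRowIsometry V)
    (hM : IsClosed (M : Set H)) (hMV : ∀ a, ∀ x ∈ M, V a x ∈ M) {x y : H} (hx : x ∈ M)
    (hxy : ∀ w, ⟪wordOp V w x, y⟫ = if w = [] then 1 else 0) : ∃ ζ ∈ M, IsWandering V ζ := by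
  let K : Submodule ℂ H :=
    (Submodule.span ℂ ((fun w => wordOp V w x) '' {w | w ≠ []})).topologicalClosure
  have hK : IsClosed (K : Set H) := Submodule.isClosed_topologicalClosure _
  have := hK.completeSpace_coe
  have mem_K {w : List ι} (hw : w ≠ []) : wordOp V w x ∈ K :=
    Submodule.le_topologicalClosure _ (Submodule.subset_span ⟨w, hw, rfl⟩)
  have K_le {N : Submodule ℂ H} (hN : IsClosed (N : Set H))
      (h : ∀ w ≠ [], wordOp V w x ∈ N) : K ≤ N :=
    Submodule.topologicalClosure_minimal _ (Submodule.span_le.2 (Set.image_subset_iff.2 h)) hN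
  have hKV (w : List ι) : K ≤ K.comap (wordOp V w).toLinearMap :=
    K_le (hK.preimage (wordOp V w).continuous) fun w' hw' => by
      change wordOp V w (wordOp V w' x) ∈ K
      rw [← wordOp_append_apply]
      exact mem_K (by simp [hw'])
  have hKy : K ≤ (Submodule.span ℂ {y})ᗮ := K_le (Submodule.isClosed_orthogonal _) fun w hw => by
    rw [Submodule.mem_orthogonal_singleton_iff_inner_left, hxy, if_neg hw]
  have hxK : x ∉ K := fun h => by
    have hxy₀ := Submodule.mem_orthogonal_singleton_iff_inner_left.1 (hKy h)
    simpa [hxy₀] using hxy []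
  set ξ := x - K.starProjection x
  have hPx : K.starProjection x ∈ K := Submodule.starProjection_apply_mem K x
  have hξ₀ : ξ ≠ 0 := fun h => hxK (sub_eq_zero.1 h ▸ hPx)
  have hξM : ξ ∈ M := M.sub_mem hx (K_le hM (fun w _ => wordOp_mem hMV w hx) hPx)
  refine ⟨_, M.smul_mem _ hξM, hV.isWandering_smul hξ₀ fun w hw => ?_⟩
  refine Submodule.sub_starProjection_mem_orthogonal x _ ?_
  rw [map_sub]
  exact K.sub_mem (mem_K hw) (hKV w hPx)

variable [Fintype ι]

theorem exists_biorthogonal (hV : IsRowIsometry V) (hC : ∑ a, V a * star (V a) = 1)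
    (hM : IsReducing V M) (hMd : M ≤ (acVectors V ⊓ M).topologicalClosure) (hM0 : M ≠ ⊥)
    {a b : ι} (hab : a ≠ b) :
    ∃ x ∈ M, ∃ y, ∀ w, ⟪wordOp V w x, y⟫ = if w = [] then 1 else 0 := by
  let Q (n : ℕ) (z : H × H) : Prop := z.1 ∈ M ∧ star (V b) z.1 = 0 ∧
    ∃ X ∈ intertwiners V, X (Fock.vec []) = z.1 ∧
      ‖Fock.vec [] - adjoint X z.2‖ ≤ ((1 / 2 : ℝ) ^ n) ^ 2
  have hstep (n z) (hz : Q n z) : ∃ z', Q (n + 1) z' ∧ dist z z' ≤ 3 * (1 / 2 : ℝ) ^ n := by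
    obtain ⟨x, y⟩ := z
    obtain ⟨hxM, hbx, X, hX, rfl, hXy⟩ := hz
    have hs : 0 < (1 / 2 : ℝ) ^ n := by positivity
    obtain ⟨X', hX', hX'M, hb', y', hdx, hdy, hXy'⟩ := exists_intertwiner_improvement hV hC hM hMd
      hM0 hab hX hxM hbx hs (show 0 < ((1 / 2 : ℝ) ^ (n + 1)) ^ 2 by positivity) hXy
    refine ⟨(X' (Fock.vec []), y'), ⟨hX'M, hb', X', hX', rfl, hXy'⟩, ?_⟩
    rw [dist_comm, Prod.dist_eq, dist_eq_norm, dist_eq_norm]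
    exact max_le (hdx.trans (by linarith)) hdy
  have h₀ : Q 0 0 := ⟨M.zero_mem, map_zero _, 0, zero_mem _, rfl, by simp [Fock.norm_vec]⟩
  obtain ⟨f, z, hf, hz⟩ := exists_tendsto_of_forall_exists_dist_le h₀ (by norm_num) hstep
  refine ⟨z.1, hM.isClosed.mem_of_tendsto hz.fst_nhds (Eventually.of_forall fun n => (hf n).1),
    z.2, fun w => ?_⟩
  have hlim : Tendsto (fun n => ⟪wordOp V w (f n).1, (f n).2⟫) atTop
      (𝓝 ⟪wordOp V w z.1, z.2⟫) :=
    (((wordOp V w).continuous.tendsto _).comp hz.fst_nhds).inner hz.snd_nhds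
  refine tendsto_nhds_unique hlim (tendsto_iff_norm_sub_tendsto_zero.2 ?_)
  refine squeeze_zero (g := fun n => ((1 / 2 : ℝ) ^ n) ^ 2) (fun _ => norm_nonneg _)
    (fun n => ?_) ?_
  · obtain ⟨-, -, X, hX, hXx, hXy⟩ := hf n
    rw [← hXx, ← intertwiners.inner_vec_adjoint hX, ← Fock.inner_vec_vec, ← inner_sub_right,
      ← norm_neg, ← inner_neg_right, neg_sub]
    refine ((norm_inner_le_norm _ _).trans_eq ?_).trans hXy
    rw [Fock.norm_vec, one_mul]
  · simpa using (tendsto_pow_atTop_nhds_zero_of_lt_one (r := (1 / 2 : ℝ)) (by norm_num)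
      (by norm_num)).pow 2

theorem exists_isWandering [Nontrivial ι] (hV : IsRowIsometry V)
    (hC : ∑ a, V a * star (V a) = 1) (hM : IsReducing V M)
    (hMd : M ≤ (acVectors V ⊓ M).topologicalClosure) (hM0 : M ≠ ⊥) :
    ∃ ζ ∈ M, IsWandering V ζ := by
  obtain ⟨a, b, hab⟩ := exists_pair_ne ι
  obtain ⟨x, hx, y, hxy⟩ := exists_biorthogonal hV hC hM hMd hM0 hab
  exact hV.exists_isWandering_of_biorthogonal hM.isClosed hM.apply_mem hx hxy

end WanderingVectors

section Density

open ContinuousLinearMap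

variable {H : Type*} [NormedAddCommGroup H] [InnerProductSpace ℂ H] [CompleteSpace H]
  {ι : Type*} {V : ι → H →L[ℂ] H} {M : Submodule ℂ H} {X : Fock ι →L[ℂ] H}

theorem starProjection_apply_comm [CompleteSpace M] {A : H →L[ℂ] H}
    (hA : ∀ x ∈ M, A x ∈ M) (hAs : ∀ x ∈ M, star A x ∈ M) (x : H) :
    M.starProjection (A x) = A (M.starProjection x) := by
  refine Submodule.eq_starProjection_of_mem_orthogonal
    (hA _ (Submodule.starProjection_apply_mem M x)) fun y hy => ?_
  rw [← map_sub, ← star_star A, inner_star_apply]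
  exact Submodule.sub_starProjection_mem_orthogonal x _ (hAs y hy)

/-- The projection onto `M` commutes with `V`, so it maps wandering vectors to absolutely
continuous vectors of `M`. -/
theorem IsReducing.le_topologicalClosure_acVectors (hM : IsReducing V M)
    (hMW : M ≤ wanderingSpan V ⊤) : M ≤ (acVectors V ⊓ M).topologicalClosure := by
  have := hM.isClosed.completeSpace_coe
  have hproj : wanderingSpan V ⊤ ≤
      (acVectors V ⊓ M).topologicalClosure.comap M.starProjection.toLinearMap := by
    refine wanderingSpan_le
      ((Submodule.isClosed_topologicalClosure _).preimage M.starProjection.continuous)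
      fun ζ _ hζ => Submodule.le_topologicalClosure _
        ⟨?_, Submodule.starProjection_apply_mem M ζ⟩
    obtain ⟨Z, hZ, rfl⟩ := hζ.exists_isometry_mem_intertwiners
    exact mem_acVectors.2 ⟨M.starProjection ∘L Z.toContinuousLinearMap,
      intertwiners.comp_left hZ fun a =>
        starProjection_apply_comm (hM.apply_mem a) (hM.star_apply_mem a), rfl⟩
  intro y hy
  simpa [Submodule.starProjection_eq_self_iff.2 hy] using hproj (hMW hy)

variable [Fintype ι]

namespace intertwiners

theorem exists_eq_sum_left (hC : ∑ a, V a * star (V a) = 1) (hX : X ∈ intertwiners V)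
    (hinj : Function.Injective X) (hM : ∀ a, ∀ x ∈ M, star (V a) x ∈ M) (hMX : M ≤ X.range)
    {f : Fock ι} (hf : X f ∈ M) :
    ∃ g : ι → Fock ι, (∀ a, X (g a) ∈ M) ∧ f = ∑ a, Fock.left a (g a) := by
  choose g hg using fun a => hMX (hM a _ hf)
  refine ⟨g, fun a => (hg a).symm ▸ hM a _ hf, hinj ?_⟩
  rw [map_sum, ← sum_apply_star_apply hC (X f)]
  exact Finset.sum_congr rfl fun a _ => by rw [apply_left hX, ← hg a]; rfl

/-- The Fock space has no Cuntz part, and this is inherited by the range of an intertwiner. -/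
theorem eq_bot_of_le_range (hC : ∑ a, V a * star (V a) = 1) (hX : X ∈ intertwiners V)
    (hinj : Function.Injective X) (hM : ∀ a, ∀ x ∈ M, star (V a) x ∈ M) (hMX : M ≤ X.range) :
    M = ⊥ := by
  have hcoord (w : List ι) : ∀ f, X f ∈ M → ⟪Fock.vec w, f⟫ = 0 := by
    induction w with
    | nil =>
      intro f hf
      obtain ⟨g, -, rfl⟩ := exists_eq_sum_left hC hX hinj hM hMX hf
      simp only [inner_sum, Fock.inner_vec_nil_left, Finset.sum_const_zero]
    | cons b w ih =>
      intro f hf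
      obtain ⟨g, hg, rfl⟩ := exists_eq_sum_left hC hX hinj hM hMX hf
      simp [Fock.inner_vec_cons_left, ih _ (hg _)]
  refine (Submodule.eq_bot_iff M).2 fun x hx => ?_
  obtain ⟨f, rfl⟩ := hMX hx
  have hf : f = 0 := Fock.ext_inner fun w => by rw [inner_zero_right]; exact hcoord w f hx
  rw [hf]
  exact map_zero X

theorem mem_wanderingSpan_of_antilipschitz (hV : IsRowIsometry V)
    (hC : ∑ a, V a * star (V a) = 1) (hX : X ∈ intertwiners V) {c : NNReal}
    (hc : AntilipschitzWith c X) (hM : IsClosed (M : Set H)) (hMV : ∀ a, ∀ x ∈ M, V a x ∈ M)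
    (hx : X (Fock.vec []) ∈ M) : X (Fock.vec []) ∈ wanderingSpan V M := by
  have hK : IsClosed (X.range : Set H) := by
    rw [LinearMap.coe_range]
    exact hc.isClosed_range X.uniformContinuous
  have hKV (a : ι) : ∀ x ∈ X.range, V a x ∈ X.range := by
    rintro _ ⟨f, rfl⟩
    exact ⟨Fock.left a f, apply_left hX a f⟩
  have hcore : backwardCore V X.range = ⊥ := eq_bot_of_le_range hC hX hc.injective
    (hV.isReducing_backwardCore hK hKV).star_apply_mem (backwardCore_le V X.range)
  have hKM : X.range ≤ M := by
    rintro _ ⟨f, rfl⟩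
    exact apply_mem hX hM hMV hx f
  exact wanderingSpan_mono hKM (hV.le_wanderingSpan_of_backwardCore_eq_bot hK hKV hcore
    ⟨Fock.vec [], rfl⟩)

end intertwiners

theorem exists_antilipschitzWith_isometry_add_smul {E F : Type*} [NormedAddCommGroup E]
    [NormedSpace ℂ E] [NormedAddCommGroup F] [NormedSpace ℂ F] (Z : E →ₗᵢ[ℂ] F) (X : E →L[ℂ] F) :
    ∃ ε : ℂ, ε ≠ 0 ∧ AntilipschitzWith 2 (Z.toContinuousLinearMap + ε • X) := by
  set ε : ℝ := (2 * (‖X‖ + 1))⁻¹ with hε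
  have hε0 : 0 < ε := by positivity
  have hεX : ε * ‖X‖ ≤ 1 / 2 := by
    rw [hε, inv_mul_le_iff₀ (by positivity)]; linarith [norm_nonneg X]
  refine ⟨ε, mod_cast hε0.ne', antilipschitz_of_bound _ fun f => ?_⟩
  have hZ : ‖f‖ ≤ ‖Z f + (ε : ℂ) • X f‖ + ‖(ε : ℂ) • X f‖ := by
    simpa using norm_sub_le (Z f + (ε : ℂ) • X f) ((ε : ℂ) • X f)
  have hX : ‖(ε : ℂ) • X f‖ ≤ 1 / 2 * ‖f‖ := by
    rw [norm_smul, Complex.norm_real, Real.norm_of_nonneg hε0.le]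
    calc ε * ‖X f‖ ≤ ε * (‖X‖ * ‖f‖) := by gcongr; exact X.le_opNorm f
      _ = ε * ‖X‖ * ‖f‖ := by ring
      _ ≤ 1 / 2 * ‖f‖ := by gcongr
  have happly : (Z.toContinuousLinearMap + (ε : ℂ) • X) f = Z f + (ε : ℂ) • X f := rfl
  rw [happly]
  push_cast
  linarith

/-- With a wandering vector `ζ` at hand, an absolutely continuous vector `x` is reached by
perturbation: the intertwiner of `ζ + ε x` is still bounded below for small `ε`. -/
theorem le_wanderingSpan_of_le_topologicalClosure_acVectors [Nontrivial ι] (hV : IsRowIsometry V)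
    (hC : ∑ a, V a * star (V a) = 1) (hM : IsReducing V M)
    (hMd : M ≤ (acVectors V ⊓ M).topologicalClosure) : M ≤ wanderingSpan V M := by
  rcases eq_or_ne M ⊥ with rfl | hM0
  · exact bot_le
  obtain ⟨ζ, hζM, hζ⟩ := exists_isWandering hV hC hM hMd hM0
  obtain ⟨Z, hZ, rfl⟩ := hζ.exists_isometry_mem_intertwiners
  refine hMd.trans (Submodule.topologicalClosure_minimal _ ?_ (isClosed_wanderingSpan V M))
  rintro x ⟨hx, hxM⟩
  obtain ⟨X, hX, rfl⟩ := mem_acVectors.1 hx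
  obtain ⟨ε, hε, hanti⟩ := exists_antilipschitzWith_isometry_add_smul Z X
  have hmem := intertwiners.mem_wanderingSpan_of_antilipschitz hV hC
    (add_mem hZ (Submodule.smul_mem _ ε hX)) hanti hM.isClosed hM.apply_mem
    (M.add_mem hζM (M.smul_mem ε hxM))
  have hεx := (wanderingSpan V M).sub_mem hmem (hζ.mem_wanderingSpan hζM)
  rw [add_apply, LinearIsometry.coe_toContinuousLinearMap, add_sub_cancel_left] at hεx
  exact (Submodule.smul_mem_iff _ hε).1 hεx

theorem backwardCore_wanderingSpan_eq_bot [Nontrivial ι] (hV : IsRowIsometry V)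
    (hC : ∑ a, V a * star (V a) = 1)
    (hac : ∀ M, IsReducing V M → M ≤ wanderingSpan V M → M = ⊥) :
    backwardCore V (wanderingSpan V ⊤) = ⊥ := by
  have hcore : IsReducing V (backwardCore V (wanderingSpan V ⊤)) :=
    hV.isReducing_backwardCore (isClosed_wanderingSpan V ⊤) fun a _ =>
      hV.apply_mem_wanderingSpan (fun _ _ _ => Submodule.mem_top) a
  exact hac _ hcore (le_wanderingSpan_of_le_topologicalClosure_acVectors hV hC hcore
    (hcore.le_topologicalClosure_acVectors (backwardCore_le V _)))

theorem IsDilationType.eq_bot_of_le_wanderingSpan (hdil : IsDilationType V) (hM : IsReducing V M)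
    (hMW : M ≤ wanderingSpan V M) : M = ⊥ := by
  by_contra hM0
  exact hdil.2 ⟨M, hM0, hM.isClosed, hM.apply_mem, hM.star_apply_mem,
    .inl (hMW.antisymm (wanderingSpan_le hM.isClosed fun _ hζ _ => hζ))⟩

end Density

namespace TwoGraphRep

variable {m n : ℕ} {θ : Equiv.Perm (Fin m × Fin n)} {H : Type*}
  [NormedAddCommGroup H] [InnerProductSpace ℂ H] [CompleteSpace H] (ρ : TwoGraphRep m n θ H)

theorem isRowIsometry_S : IsRowIsometry ρ.S := fun a b => by
  rw [ρ.isometS]; split_ifs <;> rfl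

theorem isRowIsometry_T : IsRowIsometry ρ.T := fun a b => by
  rw [ρ.isometT]; split_ifs <;> rfl

theorem inner_wordOp_mul_apply {u u' : List (Fin m)} {v v' : List (Fin n)}
    (hu : u.length = u'.length) (hv : v.length = v'.length) (x y : H) :
    ⟪(wordOp ρ.S u * wordOp ρ.T v) x, (wordOp ρ.S u' * wordOp ρ.T v') y⟫ =
      if u = u' ∧ v = v' then ⟪x, y⟫ else 0 := by
  rw [mul_apply_eq_comp, mul_apply_eq_comp, ρ.isRowIsometry_S.inner_wordOp_of_length_eq hu,
    ρ.isRowIsometry_T.inner_wordOp_of_length_eq hv]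
  split_ifs <;> simp_all

theorem T_mul_S (i : Fin m) (j : Fin n) :
    ρ.T j * ρ.S i = ρ.S (θ.symm (i, j)).1 * ρ.T (θ.symm (i, j)).2 := by
  simp [ρ.comm]

theorem exists_T_mul_wordOp_S_eq (j : Fin n) (u : List (Fin m)) :
    ∃ u' j', u'.length = u.length ∧ ρ.T j * wordOp ρ.S u = wordOp ρ.S u' * ρ.T j' := by
  induction u generalizing j with
  | nil => exact ⟨[], j, rfl, by simp⟩
  | cons i u ih =>
    obtain ⟨u', j', hu, h⟩ := ih (θ.symm (i, j)).2
    refine ⟨(θ.symm (i, j)).1 :: u', j', by simp [hu], ?_⟩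
    rw [wordOp_cons, wordOp_cons, ← mul_assoc, T_mul_S, mul_assoc, h, mul_assoc]

theorem exists_wordOp_T_mul_wordOp_S_eq (v : List (Fin n)) (u : List (Fin m)) :
    ∃ u' v', u'.length = u.length ∧ v'.length = v.length ∧
      wordOp ρ.T v * wordOp ρ.S u = wordOp ρ.S u' * wordOp ρ.T v' := by
  induction v with
  | nil => exact ⟨u, [], rfl, rfl, by simp⟩
  | cons j v ih =>
    obtain ⟨u', v', hu, hv, h⟩ := ih
    obtain ⟨u'', j', hu', h'⟩ := ρ.exists_T_mul_wordOp_S_eq j u'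
    refine ⟨u'', j' :: v', hu'.trans hu, by simp [hv], ?_⟩
    rw [wordOp_cons, wordOp_cons, mul_assoc, h, ← mul_assoc, h', mul_assoc]

theorem exists_S_mul_wordOp_T_eq (i : Fin m) (v : List (Fin n)) :
    ∃ v' i', v'.length = v.length ∧ ρ.S i * wordOp ρ.T v = wordOp ρ.T v' * ρ.S i' := by
  induction v generalizing i with
  | nil => exact ⟨[], i, rfl, by simp⟩
  | cons j v ih =>
    obtain ⟨v', i', hv, h⟩ := ih (θ (i, j)).1
    refine ⟨(θ (i, j)).2 :: v', i', by simp [hv], ?_⟩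
    rw [wordOp_cons, wordOp_cons, ← mul_assoc, ρ.comm, mul_assoc, h, mul_assoc]

theorem exists_wordOp_S_mul_wordOp_T_eq (u : List (Fin m)) (v : List (Fin n)) :
    ∃ v' u', v'.length = v.length ∧ u'.length = u.length ∧
      wordOp ρ.S u * wordOp ρ.T v = wordOp ρ.T v' * wordOp ρ.S u' := by
  induction u with
  | nil => exact ⟨v, [], rfl, rfl, by simp⟩
  | cons i u ih =>
    obtain ⟨v', u', hv, hu, h⟩ := ih
    obtain ⟨v'', i', hv', h'⟩ := ρ.exists_S_mul_wordOp_T_eq i v'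
    refine ⟨v'', i' :: u', hv'.trans hv, by simp [hu], ?_⟩
    rw [wordOp_cons, wordOp_cons, mul_assoc, h, ← mul_assoc, h', mul_assoc]

/-- `A` is one of the operators `S_u T_v` of degree `(a, b)`, that is, with `|u| = a` and
`|v| = b`. -/
def HasDegree (a b : ℕ) (A : H →L[ℂ] H) : Prop :=
  ∃ u v, u.length = a ∧ v.length = b ∧ A = wordOp ρ.S u * wordOp ρ.T v

namespace HasDegree

variable {ρ} {a b c d : ℕ} {A B : H →L[ℂ] H}

theorem one : ρ.HasDegree 0 0 1 := ⟨[], [], rfl, rfl, by simp⟩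

theorem eq_one (hA : ρ.HasDegree 0 0 A) : A = 1 := by
  obtain ⟨u, v, hu, hv, rfl⟩ := hA
  rw [List.length_eq_zero_iff.1 hu, List.length_eq_zero_iff.1 hv, wordOp_nil, wordOp_nil, one_mul]

theorem mul (hA : ρ.HasDegree a b A) (hB : ρ.HasDegree c d B) :
    ρ.HasDegree (a + c) (b + d) (A * B) := by
  obtain ⟨u, v, rfl, rfl, rfl⟩ := hA
  obtain ⟨u', v', rfl, rfl, rfl⟩ := hB
  obtain ⟨u₁, v₁, hu₁, hv₁, h⟩ := ρ.exists_wordOp_T_mul_wordOp_S_eq v u'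
  refine ⟨u ++ u₁, v₁ ++ v', by simp [hu₁], by simp [hv₁], ?_⟩
  rw [wordOp_append, wordOp_append, mul_assoc, ← mul_assoc (wordOp ρ.T v), h]
  simp only [mul_assoc]

theorem exists_mul_eq (hA : ρ.HasDegree (a + c) (b + d) A) :
    ∃ B C, ρ.HasDegree a b B ∧ ρ.HasDegree c d C ∧ B * C = A := by
  obtain ⟨u, v, hu, hv, rfl⟩ := hA
  obtain ⟨v₁, u₁, hv₁, hu₁, h⟩ := ρ.exists_wordOp_S_mul_wordOp_T_eq (u.drop a) (v.take b)
  refine ⟨_, _, ⟨u.take a, v₁, by simp [hu], by simp [hv₁, hv], rfl⟩,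
    ⟨u₁, v.drop b, by simp [hu₁, hu], by simp [hv], rfl⟩, ?_⟩
  conv_rhs => rw [← List.take_append_drop a u, ← List.take_append_drop b v]
  rw [wordOp_append, wordOp_append, mul_assoc, mul_assoc, ← mul_assoc (wordOp ρ.S (u.drop a)), h,
    mul_assoc]

theorem norm_apply (hA : ρ.HasDegree a b A) (x : H) : ‖A x‖ = ‖x‖ := by
  obtain ⟨u, v, -, -, rfl⟩ := hA
  rw [mul_apply_eq_comp, ρ.isRowIsometry_S.norm_wordOp, ρ.isRowIsometry_T.norm_wordOp]

theorem inner_eq_zero (hA : ρ.HasDegree a b A) (hB : ρ.HasDegree a b B) {x y : H}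
    (h : ⟪x, y⟫ = 0) : ⟪A x, B y⟫ = 0 := by
  obtain ⟨u, v, rfl, rfl, rfl⟩ := hA
  obtain ⟨u', v', hu', hv', rfl⟩ := hB
  rw [ρ.inner_wordOp_mul_apply hu'.symm hv'.symm, h, ite_self]

end HasDegree

theorem isRowIsometry_rowKL (k l : ℕ) : IsRowIsometry (ρ.rowKL k l) :=
  IsRowIsometry.of_inner fun p p' x y => by
    simp only [rowKL, fnWordOp]
    rw [ρ.inner_wordOp_mul_apply (by simp) (by simp)]
    simp only [List.ofFn_inj, ← Prod.ext_iff]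
    congr

theorem hasDegree_rowKL (k l : ℕ) (p : (Fin k → Fin m) × (Fin l → Fin n)) :
    ρ.HasDegree k l (ρ.rowKL k l p) :=
  ⟨List.ofFn p.1, List.ofFn p.2, by simp, by simp, rfl⟩

variable {ρ} {k l : ℕ}

theorem hasDegree_wordOp_rowKL (w : List ((Fin k → Fin m) × (Fin l → Fin n))) :
    ρ.HasDegree (w.length * k) (w.length * l) (wordOp (ρ.rowKL k l) w) := by
  induction w with
  | nil => simpa using HasDegree.one
  | cons p w ih =>
    rw [wordOp_cons, List.length_cons, Nat.succ_mul, Nat.succ_mul, Nat.add_comm _ k,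
      Nat.add_comm _ l]
    exact (ρ.hasDegree_rowKL k l p).mul ih

theorem HasDegree.exists_rowKL_eq {A : H →L[ℂ] H} (hA : ρ.HasDegree k l A) :
    ∃ p, ρ.rowKL k l p = A := by
  obtain ⟨u, v, rfl, rfl, rfl⟩ := hA
  exact ⟨(u.get, v.get), by simp [rowKL, fnWordOp]⟩

theorem HasDegree.exists_wordOp_rowKL_eq {r : ℕ} {A : H →L[ℂ] H}
    (hA : ρ.HasDegree (r * k) (r * l) A) :
    ∃ w : List _, w.length = r ∧ wordOp (ρ.rowKL k l) w = A := by
  induction r generalizing A with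
  | zero =>
    rw [Nat.zero_mul, Nat.zero_mul] at hA
    exact ⟨[], rfl, by rw [hA.eq_one, wordOp_nil]⟩
  | succ r ih =>
    rw [Nat.succ_mul, Nat.succ_mul, Nat.add_comm _ k, Nat.add_comm _ l] at hA
    obtain ⟨B, C, hB, hC, rfl⟩ := hA.exists_mul_eq
    obtain ⟨p, rfl⟩ := hB.exists_rowKL_eq
    obtain ⟨w, rfl, rfl⟩ := ih hC
    exact ⟨p :: w, rfl, wordOp_cons _ p w⟩

theorem isWandering_rowKL_iff {ζ : H} : IsWandering (ρ.rowKL k l) ζ ↔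
    ‖ζ‖ = 1 ∧ ∀ r, 0 < r → ∀ A, ρ.HasDegree (r * k) (r * l) A → ⟪A ζ, ζ⟫ = 0 := by
  rw [(ρ.isRowIsometry_rowKL k l).isWandering_iff]
  refine and_congr_right fun _ => ⟨fun h r hr A hA => ?_, fun h w hw =>
    h w.length (List.length_pos_iff.2 hw) _ (hasDegree_wordOp_rowKL w)⟩
  obtain ⟨w, rfl, rfl⟩ := hA.exists_wordOp_rowKL_eq
  exact h w (List.length_pos_iff.1 hr)

theorem HasDegree.inner_eq_zero_of_isWandering {ζ : H} (hζ : IsWandering (ρ.rowKL k l) ζ)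
    {r s : ℕ} (hrs : r ≠ s) {A B : H →L[ℂ] H} (hA : ρ.HasDegree (r * k) (r * l) A)
    (hB : ρ.HasDegree (s * k) (s * l) B) : ⟪A ζ, B ζ⟫ = 0 := by
  obtain ⟨w, rfl, rfl⟩ := hA.exists_wordOp_rowKL_eq
  obtain ⟨w', rfl, rfl⟩ := hB.exists_wordOp_rowKL_eq
  rw [hζ.2, if_neg (ne_of_apply_ne List.length hrs)]

theorem isWanderingKL_iff (hk : 0 < k) {ζ : H} :
    ρ.IsWanderingKL k l ζ ↔ IsWandering (ρ.rowKL k l) ζ := by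
  refine ⟨fun hζ => isWandering_rowKL_iff.2 ⟨hζ.1, fun r hr A hA => ?_⟩,
    fun hζ => ⟨hζ.1, fun r s u u' v v' hu hv hu' hv' => ?_⟩⟩
  · obtain ⟨u, v, hu, hv, rfl⟩ := hA
    have hu0 : u ≠ [] := List.length_pos_iff.1 (hu ▸ Nat.mul_pos hr hk)
    simpa [hu0] using hζ.2 r 0 u [] v [] hu hv (by simp) (by simp)
  · rcases eq_or_ne r s with rfl | hrs
    · rw [ρ.inner_wordOp_mul_apply (hu.trans hu'.symm) (hv.trans hv'.symm),
        inner_self_eq_norm_sq_to_K, hζ.1]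
      simp
    · have hne : ¬(u = u' ∧ v = v') := fun h =>
        hrs (Nat.eq_of_mul_eq_mul_right hk (hu.symm.trans (h.1 ▸ hu')))
      rw [if_neg hne]
      exact HasDegree.inner_eq_zero_of_isWandering hζ hrs ⟨u, v, hu, hv, rfl⟩
        ⟨u', v', hu', hv', rfl⟩

theorem structSpaceKL_eq (hk : 0 < k) :
    ρ.structSpaceKL k l = (wanderingSpan (ρ.rowKL k l) ⊤)ᗮ := by
  simp [structSpaceKL, wanderingSpan, isWanderingKL_iff hk]

theorem HasDegree.isWandering_apply {c d : ℕ} {G : H →L[ℂ] H} (hG : ρ.HasDegree c d G) {ζ : H}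
    (hζ : IsWandering (ρ.rowKL k l) ζ) : IsWandering (ρ.rowKL k l) (G ζ) := by
  rw [isWandering_rowKL_iff] at hζ ⊢
  refine ⟨by rw [hG.norm_apply, hζ.1], fun r hr A hA => ?_⟩
  have hAG := hA.mul hG
  rw [Nat.add_comm _ c, Nat.add_comm _ d] at hAG
  obtain ⟨B, C, hB, hC, h⟩ := hAG.exists_mul_eq
  have happly : A (G ζ) = B (C ζ) := congrArg (fun D : H →L[ℂ] H => D ζ) h.symm
  rw [happly]
  exact hB.inner_eq_zero hG (hζ.2 r hr C hC)

theorem HasDegree.apply_mem_wanderingSpan {c d : ℕ} {G : H →L[ℂ] H} (hG : ρ.HasDegree c d G)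
    {x : H} (hx : x ∈ wanderingSpan (ρ.rowKL k l) ⊤) :
    G x ∈ wanderingSpan (ρ.rowKL k l) ⊤ := by
  suffices wanderingSpan (ρ.rowKL k l) ⊤ ≤ (wanderingSpan (ρ.rowKL k l) ⊤).comap G.toLinearMap
    from this hx
  exact wanderingSpan_le ((isClosed_wanderingSpan _ _).preimage G.continuous)
    fun ζ _ hζ => (hG.isWandering_apply hζ).mem_wanderingSpan Submodule.mem_top

theorem CuntzType.sum_rowKL_mul_star (hρ : ρ.CuntzType) (k l : ℕ) :
    ∑ p, ρ.rowKL k l p * star (ρ.rowKL k l p) = 1 := by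
  rw [Fintype.sum_prod_type, ← sum_fnWordOp_mul_star hρ.1 k]
  refine Finset.sum_congr rfl fun u _ => ?_
  calc ∑ v, ρ.rowKL k l (u, v) * star (ρ.rowKL k l (u, v))
      = fnWordOp ρ.S u * (∑ v : Fin l → Fin n, fnWordOp ρ.T v * star (fnWordOp ρ.T v)) *
          star (fnWordOp ρ.S u) := by
        simp only [rowKL, star_mul, Finset.mul_sum, Finset.sum_mul, mul_assoc]
    _ = fnWordOp ρ.S u * star (fnWordOp ρ.S u) := by rw [sum_fnWordOp_mul_star hρ.2, mul_one]

/-- Backward shifts into an invariant subspace descend to smaller degrees, since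
`A* x = ∑ B (A B)* x` where `B` ranges over the operators `S_u T_v` of a fixed degree. -/
theorem HasDegree.star_apply_mem (hρ : ρ.CuntzType) {W : Submodule ℂ H}
    (hW : ∀ c d G, ρ.HasDegree c d G → ∀ x ∈ W, G x ∈ W) {a b c d : ℕ} {x : H}
    (hx : ∀ A, ρ.HasDegree (a + c) (b + d) A → star A x ∈ W) {A : H →L[ℂ] H}
    (hA : ρ.HasDegree a b A) : star A x ∈ W := by
  rw [← sum_apply_star_apply (hρ.sum_rowKL_mul_star c d) (star A x)]
  refine W.sum_mem fun p _ => hW c d _ (ρ.hasDegree_rowKL c d p) _ ?_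
  simpa [star_mul] using hx _ (hA.mul (ρ.hasDegree_rowKL c d p))

theorem backwardCore_rowKL_le (hρ : ρ.CuntzType) {W : Submodule ℂ H}
    (hW : ∀ c d G, ρ.HasDegree c d G → ∀ x ∈ W, G x ∈ W) {p q : ℕ} (hp : 0 < p) (hq : 0 < q)
    (k l : ℕ) : backwardCore (ρ.rowKL p q) W ≤ backwardCore (ρ.rowKL k l) W := by
  refine fun x hx => mem_backwardCore.2 fun w => ?_
  let r := w.length * k + w.length * l
  have hk : w.length * k ≤ r * p := (Nat.le_add_right _ _).trans (Nat.le_mul_of_pos_right r hp)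
  have hl : w.length * l ≤ r * q := (Nat.le_add_left _ _).trans (Nat.le_mul_of_pos_right r hq)
  refine (hasDegree_wordOp_rowKL w).star_apply_mem hρ hW (c := r * p - w.length * k)
    (d := r * q - w.length * l) fun A hA => ?_
  rw [Nat.add_sub_cancel' hk, Nat.add_sub_cancel' hl] at hA
  obtain ⟨w', -, rfl⟩ := hA.exists_wordOp_rowKL_eq
  exact mem_backwardCore.1 hx w'

end TwoGraphRep

theorem nontrivial_prod_fin_arrow {m n k l : ℕ} (hm : 0 < m) (hn : 0 < n) (hmn : 2 ≤ m ∨ 2 ≤ n)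
    (hk : 0 < k) (hl : 0 < l) : Nontrivial ((Fin k → Fin m) × (Fin l → Fin n)) := by
  have : NeZero m := ⟨hm.ne'⟩
  have : NeZero n := ⟨hn.ne'⟩
  have : NeZero k := ⟨hk.ne'⟩
  have : NeZero l := ⟨hl.ne'⟩
  rcases hmn with hm2 | hn2
  · have := Fin.nontrivial_iff_two_le.2 hm2
    infer_instance
  · have := Fin.nontrivial_iff_two_le.2 hn2
    infer_instance

theorem statement8_general {m n : ℕ} (hm : 0 < m) (hn : 0 < n) (hmn : 2 ≤ m ∨ 2 ≤ n)
    {θ : Equiv.Perm (Fin m × Fin n)} {H : Type*}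
    [NormedAddCommGroup H] [InnerProductSpace ℂ H] [CompleteSpace H]
    (ρ : TwoGraphRep m n θ H) (hCuntz : ρ.CuntzType) {k l : ℕ} (hk : 0 < k) (hl : 0 < l)
    (hac : ∀ M, IsReducing (ρ.rowKL k l) M → M ≤ wanderingSpan (ρ.rowKL k l) M → M = ⊥)
    {p q : ℕ} (hp : 0 < p) (hq : 0 < q) : ρ.structSpaceKL p q ≤ ρ.structSpaceKL k l := by
  have := nontrivial_prod_fin_arrow hm hn hmn hk hl
  set W := wanderingSpan (ρ.rowKL k l) ⊤
  have hW : ∀ c d G, ρ.HasDegree c d G → ∀ x ∈ W, G x ∈ W :=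
    fun _ _ _ hG _ => hG.apply_mem_wanderingSpan
  have hcore : backwardCore (ρ.rowKL p q) W = ⊥ := by
    rw [eq_bot_iff, ← backwardCore_wanderingSpan_eq_bot (ρ.isRowIsometry_rowKL k l)
      (hCuntz.sum_rowKL_mul_star k l) hac]
    exact TwoGraphRep.backwardCore_rowKL_le hCuntz hW hp hq k l
  have hle : W ≤ wanderingSpan (ρ.rowKL p q) ⊤ :=
    ((ρ.isRowIsometry_rowKL p q).le_wanderingSpan_of_backwardCore_eq_bot
      (isClosed_wanderingSpan _ _) (fun c => hW p q _ (ρ.hasDegree_rowKL p q c)) hcore).trans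
      (wanderingSpan_mono le_top)
  rw [TwoGraphRep.structSpaceKL_eq hp, TwoGraphRep.structSpaceKL_eq hk]
  exact Submodule.orthogonal_le hle

/-- If the row-isometry `[S_u T_v : |u|=k, |v|=l]` is of dilation type, then its structure
projection dominates all the others: `P_{p,q}H ⊆ P_{k,l}H` for all `p, q > 0`. -/
theorem statement8 {m n : ℕ} (hm : 0 < m) (hn : 0 < n) (hmn : 2 ≤ m ∨ 2 ≤ n)
    {θ : Equiv.Perm (Fin m × Fin n)} {H : Type*}
    [NormedAddCommGroup H] [InnerProductSpace ℂ H] [CompleteSpace H]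
    (ρ : TwoGraphRep m n θ H) (hCuntz : ρ.CuntzType)
    (k l : ℕ) (hk : 0 < k) (hl : 0 < l)
    (hdil : IsDilationType (ρ.rowKL k l)) :
    ∀ p q : ℕ, 0 < p → 0 < q → ρ.structSpaceKL p q ≤ ρ.structSpaceKL k l :=
  fun _ _ hp hq => statement8_general hm hn hmn ρ hCuntz hk hl
    (fun _ => hdil.eq_bot_of_le_wanderingSpan) hp hq
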